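/- arXiv:2310.09775 — 5 statements merged into one kernel-verified Lean document; each statement's English description precedes it below -/
import Mathlib

section
/- Let a, b be natural numbers with a ≥ 1 and b ≥ 1, and let p be a polynomial with complex coefficients whose degree satisfies deg p + 2 ≤ a + b. Then the function x ↦ p(x)/((x−i)^a·(x+i)^b) (with x the real variable coerced to ℂ) is integrable on ℝ and ∫_ℝ p(x)/((x−i)^a·(x+i)^b) dx = (2πi/(a−1)!) · g^{(a−1)}(i), where g : ℂ → ℂ is g(z) = p(z)/(z+i)^b and g^{(a−1)} denotes its (a−1)-st iterated complex derivative. -/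
/-!
The Möbius map `w = (z - α) / (z - β)` carries the extended real line to a circle around `0`, and
`(x - α) ^ m * (x - β) ^ (-2 - m) dx` to a constant multiple of `w ^ m dw`, whose integral over that
circle vanishes unless `m = -1`. A polynomial `p` of degree at most `N = a + b - 2` is a combination
`∑ j, c j * (X - α) ^ j * (X - β) ^ (N - j)`, so dividing by `(x - α) ^ a * (x - β) ^ b` and
integrating leaves only the coefficient `c (a - 1)`. The `(a - 1)`-st derivative of
`p(z) / (z - β) ^ b` at `α` picks out the same coefficient.
-/

open MeasureTheory Complex

open Filter Topology Asymptotics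

section Expansion

open Polynomial Finset

variable {K : Type*} [Field K] {α β : K}

lemma exists_eq_sum_X_sub_C_pow_mul_X_sub_C_pow (hαβ : α ≠ β) (N : ℕ) (p : K[X])
    (hp : p.natDegree ≤ N) :
    ∃ c : ℕ → K, p = ∑ j ∈ range (N + 1), C (c j) * ((X - C α) ^ j * (X - C β) ^ (N - j)) := by
  induction N generalizing p with
  | zero =>
    refine ⟨fun _ => p.coeff 0, ?_⟩
    simpa only [zero_add, range_one, sum_singleton, Nat.sub_zero, pow_zero, mul_one] using
      eq_C_of_natDegree_le_zero hp
  | succ N ih =>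
    obtain ⟨c₀, hc₀⟩ : ∃ c₀, c₀ * (α - β) ^ (N + 1) = p.eval α :=
      ⟨_, div_mul_cancel₀ _ (pow_ne_zero _ (sub_ne_zero.2 hαβ))⟩
    obtain ⟨q, hq⟩ : X - C α ∣ p - C c₀ * (X - C β) ^ (N + 1) := by
      simp [dvd_iff_isRoot, hc₀]
    have hdeg : (p - C c₀ * (X - C β) ^ (N + 1)).natDegree ≤ N + 1 := by
      refine (natDegree_sub_le _ _).trans (max_le hp ((natDegree_C_mul_le _ _).trans ?_))
      rw [natDegree_pow, natDegree_X_sub_C, mul_one]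
    have hqdeg : q.natDegree ≤ N := by
      rcases eq_or_ne q 0 with rfl | hq0
      · simp
      · rw [hq, natDegree_mul (X_sub_C_ne_zero α) hq0, natDegree_X_sub_C] at hdeg
        omega
    obtain ⟨c, hc⟩ := ih q hqdeg
    refine ⟨fun | 0 => c₀ | j + 1 => c j, ?_⟩
    rw [sub_eq_iff_eq_add.1 hq, sum_range_succ', hc, mul_sum]
    congr 1
    · refine sum_congr rfl fun j _ => ?_
      rw [Nat.add_sub_add_right]
      ring
    · simp

lemma exists_eval_div_pow_eq_sum_zpow (hαβ : α ≠ β) {n b : ℕ} (p : K[X])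
    (hp : p.natDegree + 1 ≤ n + b) :
    ∃ c : ℕ → K, ∀ z, z ≠ β → p.eval z / (z - β) ^ b =
      ∑ j ∈ range (n + b), c j * ((z - α) ^ j * (z - β) ^ ((n : ℤ) - j - 1)) := by
  obtain ⟨c, hc⟩ :=
    exists_eq_sum_X_sub_C_pow_mul_X_sub_C_pow hαβ (n + b - 1) p (by omega)
  refine ⟨c, fun z hz => ?_⟩
  rw [Nat.sub_add_cancel (by omega)] at hc
  conv_lhs => rw [hc]
  rw [eval_finsetSum, sum_div]
  refine sum_congr rfl fun j hj => ?_
  have hj : j < n + b := mem_range.1 hj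
  have hexp : (n : ℤ) - j - 1 = (n + b - 1 - j : ℕ) - (b : ℕ) := by omega
  rw [hexp, zpow_sub₀ (sub_ne_zero.2 hz), zpow_natCast, zpow_natCast]
  simp [mul_div_assoc]

end Expansion

section IteratedDeriv

open Finset

variable {𝕜 : Type*} [NontriviallyNormedField 𝕜] {α β : 𝕜}

lemma iteratedDeriv_sub_pow_mul {n : ℕ} (j : ℕ) {h : 𝕜 → 𝕜} (hh : ContDiffAt 𝕜 n h α) :
    iteratedDeriv n (fun z => (z - α) ^ j * h z) α =
      n.descFactorial j * iteratedDeriv (n - j) h α := by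
  have hpow (i : ℕ) : iteratedDeriv i (fun z : 𝕜 => (z - α) ^ j) α =
      if i = j then (j.factorial : 𝕜) else 0 := by
    rw [iteratedDeriv_comp_sub_const (f := fun z : 𝕜 => z ^ j)]
    simp only [sub_self, iteratedDeriv_fun_pow_zero]
    split_ifs <;> simp
  rw [show (fun z => (z - α) ^ j * h z) = (fun z => (z - α) ^ j) * h from rfl,
    iteratedDeriv_mul (by fun_prop) hh, sum_eq_single j]
  · simp [hpow, Nat.descFactorial_eq_factorial_mul_choose, mul_comm]
  · intro i _ hij
    simp [hpow, hij]
  · intro hj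
    have : n < j := by simpa [Nat.lt_succ_iff] using hj
    simp [Nat.choose_eq_zero_of_lt this]

lemma iteratedDeriv_sub_zpow (m : ℤ) (k : ℕ) (z : 𝕜) :
    iteratedDeriv k (fun z => (z - β) ^ m) z =
      (∏ i ∈ range k, ((m : 𝕜) - i)) * (z - β) ^ (m - k) := by
  rw [iteratedDeriv_comp_sub_const (f := fun z : 𝕜 => z ^ m)]
  simp only [iteratedDeriv_eq_iterate, iter_deriv_zpow]

lemma contDiffAt_sub_zpow [CompleteSpace 𝕜] (hαβ : α ≠ β) (m : ℤ) {n : WithTop ℕ∞} :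
    ContDiffAt 𝕜 n (fun z => (z - β) ^ m) α :=
  ((analyticAt_id.sub analyticAt_const).zpow (sub_ne_zero.2 hαβ)).contDiffAt

lemma iteratedDeriv_sub_pow_mul_sub_zpow [CompleteSpace 𝕜] (hαβ : α ≠ β) (n j : ℕ) :
    iteratedDeriv n (fun z => (z - α) ^ j * (z - β) ^ ((n : ℤ) - j - 1)) α =
      if j = n then (n.factorial : 𝕜) / (α - β) else 0 := by
  rw [iteratedDeriv_sub_pow_mul j (contDiffAt_sub_zpow hαβ _)]
  rcases lt_trichotomy j n with hlt | rfl | hgt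
  · -- The second factor is a polynomial of degree `n - j - 1`, differentiated `n - j` times.
    rw [if_neg hlt.ne, iteratedDeriv_sub_zpow,
      prod_eq_zero (mem_range.2 (by omega : n - j - 1 < n - j)), zero_mul, mul_zero]
    push_cast [Nat.cast_sub hlt.le, Nat.cast_sub (by omega : 1 ≤ n - j)]
    ring
  · simp [Nat.descFactorial_self, div_eq_mul_inv]
  · simp [Nat.descFactorial_eq_zero_iff_lt.2 hgt, hgt.ne']

lemma iteratedDeriv_sum_sub_pow_mul_sub_zpow [CompleteSpace 𝕜] (hαβ : α ≠ β) (n : ℕ)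
    (s : Finset ℕ) (c : ℕ → 𝕜) (m : ℕ → ℤ) :
    iteratedDeriv n (fun z => ∑ j ∈ s, c j * ((z - α) ^ j * (z - β) ^ m j)) α =
      ∑ j ∈ s, c j * iteratedDeriv n (fun z => (z - α) ^ j * (z - β) ^ m j) α := by
  rw [iteratedDeriv_fun_sum fun j _ =>
    contDiffAt_const.mul (ContDiffAt.mul (by fun_prop) (contDiffAt_sub_zpow hαβ _))]
  simp only [iteratedDeriv_const_mul_field]

end IteratedDeriv

section RealLine

variable {α β : ℂ}

lemma ofReal_sub_ne_zero (hα : α.im ≠ 0) (x : ℝ) : (x : ℂ) - α ≠ 0 := fun h =>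
  hα (by simpa using congrArg im h)

lemma continuous_sub_zpow_mul_sub_zpow (hα : α.im ≠ 0) (hβ : β.im ≠ 0) (m n : ℤ) :
    Continuous fun x : ℝ => ((x : ℂ) - α) ^ m * ((x : ℂ) - β) ^ n :=
  ((by fun_prop : Continuous fun x : ℝ => (x : ℂ) - α).zpow₀ m
    fun x => .inl (ofReal_sub_ne_zero hα x)).mul
  ((by fun_prop : Continuous fun x : ℝ => (x : ℂ) - β).zpow₀ n
    fun x => .inl (ofReal_sub_ne_zero hβ x))

lemma tendsto_sub_div_sub_cobounded (hβ : β.im ≠ 0) :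
    Tendsto (fun x : ℝ => ((x : ℂ) - α) / (x - β)) (Bornology.cobounded ℝ) (𝓝 1) := by
  have hinv : Tendsto (fun x : ℝ => ((x : ℂ) - β)⁻¹) (Bornology.cobounded ℝ) (𝓝 0) :=
    tendsto_inv₀_cobounded.comp ((tendsto_sub_const_cobounded β).comp
      (RCLike.tendsto_ofReal_cobounded_cobounded ℂ))
  have heq (x : ℝ) : ((x : ℂ) - α) / (x - β) = 1 + (β - α) * ((x : ℂ) - β)⁻¹ := by
    have := ofReal_sub_ne_zero hβ x
    field_simp
    ring
  simpa [heq] using (hinv.const_mul (β - α)).const_add 1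

lemma tendsto_sub_zpow_mul_sub_zpow_neg_cobounded (hβ : β.im ≠ 0) (m : ℤ) :
    Tendsto (fun x : ℝ => ((x : ℂ) - α) ^ m * ((x : ℂ) - β) ^ (-m))
      (Bornology.cobounded ℝ) (𝓝 1) := by
  simpa [div_zpow, div_eq_mul_inv, mul_zpow] using
    (tendsto_sub_div_sub_cobounded (α := α) hβ).zpow₀ m (.inl one_ne_zero)

lemma integrable_sub_zpow_mul_sub_zpow (hα : α.im ≠ 0) (hβ : β.im ≠ 0) (m : ℤ) :
    Integrable fun x : ℝ => ((x : ℂ) - α) ^ m * ((x : ℂ) - β) ^ (-2 - m) := by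
  have hlim : Tendsto (fun x : ℝ => ((x : ℂ) - α) ^ m * ((x : ℂ) - β) ^ (-2 - m) /
      (((1 + x ^ 2)⁻¹ : ℝ) : ℂ)) (cocompact ℝ) (𝓝 1) := by
    have h := ((tendsto_sub_zpow_mul_sub_zpow_neg_cobounded (α := α) hβ m).mul
      (tendsto_sub_div_sub_cobounded (α := I) hβ)).mul (tendsto_sub_div_sub_cobounded (α := -I) hβ)
    rw [← Metric.cobounded_eq_cocompact]
    simp only [mul_one] at h
    refine h.congr fun x => ?_
    have hx := ofReal_sub_ne_zero hβ x
    have hsq : ((x : ℂ) - I) * (x - -I) = 1 + x ^ 2 := by linear_combination -I_sq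
    rw [show -2 - m = -m - 2 by ring, zpow_sub₀ hx, ofReal_inv, div_inv_eq_mul]
    push_cast
    rw [← hsq]
    field_simp
  have hO : (fun x : ℝ => ((x : ℂ) - α) ^ m * ((x : ℂ) - β) ^ (-2 - m)) =O[cocompact ℝ]
      fun x => (((1 + x ^ 2)⁻¹ : ℝ) : ℂ) :=
    isBigO_of_div_tendsto_nhds (.of_forall fun x hx => by
      rw [ofReal_eq_zero] at hx
      exact absurd hx (by positivity)) 1 hlim
  have hloc := (continuous_sub_zpow_mul_sub_zpow hα hβ m (-2 - m)).locallyIntegrable (μ := volume)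
  exact hloc.integrable_of_isBigO_cocompact hO
    (integrable_inv_one_add_sq.ofReal.integrableAtFilter _)

lemma integral_sub_zpow_mul_sub_zpow_eq_zero (hα : α.im ≠ 0) (hβ : β.im ≠ 0) (hαβ : α ≠ β)
    {m : ℤ} (hm : m ≠ -1) :
    ∫ x : ℝ, ((x : ℂ) - α) ^ m * ((x : ℂ) - β) ^ (-2 - m) = 0 := by
  have hm' : (m : ℂ) + 1 ≠ 0 := by exact_mod_cast fun h => hm (eq_neg_of_add_eq_zero_left h)
  have hd (x : ℝ) : HasDerivAt
      (fun x : ℝ => ((x : ℂ) - α) ^ (m + 1) * ((x : ℂ) - β) ^ (-(m + 1)) / ((m + 1) * (α - β)))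
      (((x : ℂ) - α) ^ m * ((x : ℂ) - β) ^ (-2 - m)) x := by
    have hxα := ofReal_sub_ne_zero hα x
    have hxβ := ofReal_sub_ne_zero hβ x
    have hzpow {γ : ℂ} (hγ : (x : ℂ) - γ ≠ 0) (k : ℤ) :
        HasDerivAt (fun x : ℝ => ((x : ℂ) - γ) ^ k) (k * ((x : ℂ) - γ) ^ (k - 1)) x := by
      simpa using ((hasDerivAt_zpow k _ (.inl hγ)).comp (x : ℂ)
        ((hasDerivAt_id _).sub_const γ)).comp_ofReal
    refine (((hzpow hxα (m + 1)).mul (hzpow hxβ (-(m + 1)))).div_const _).congr_deriv ?_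
    have hαβ' := sub_ne_zero.2 hαβ
    rw [add_sub_cancel_right, show -(m + 1) - 1 = -2 - m by ring,
      show -(m + 1) = (-2 - m) + 1 by ring, zpow_add_one₀ hxα, zpow_add_one₀ hxβ]
    push_cast
    field_simp
    ring
  have hlim := (tendsto_sub_zpow_mul_sub_zpow_neg_cobounded (α := α) hβ (m + 1)).div_const
    ((m + 1) * (α - β))
  rw [integral_of_hasDerivAt_of_tendsto hd (integrable_sub_zpow_mul_sub_zpow hα hβ m)
    (hlim.mono_left IsOrderBornology.atBot_le_cobounded)
    (hlim.mono_left IsOrderBornology.atTop_le_cobounded), sub_self]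

lemma tendsto_log_mul_sub_sub_log {c : ℂ} (hc : c ∈ slitPlane) (α : ℂ) :
    Tendsto (fun x : ℝ => log (c * (x - α)) - Real.log x) atTop (𝓝 (log c)) := by
  have hinv : Tendsto (fun x : ℝ => (x : ℂ)⁻¹) atTop (𝓝 0) :=
    tendsto_inv₀_cobounded.comp ((RCLike.tendsto_ofReal_cobounded_cobounded ℂ).mono_left
      IsOrderBornology.atTop_le_cobounded)
  have hlim : Tendsto (fun x : ℝ => c * (1 - α * (x : ℂ)⁻¹)) atTop (𝓝 c) := by
    simpa using ((hinv.const_mul α).const_sub 1).const_mul c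
  refine (hlim.clog hc).congr' ?_
  filter_upwards [eventually_gt_atTop 0, hlim.eventually_ne (slitPlane_ne_zero hc)] with x hx hne
  have hx' : (x : ℂ) ≠ 0 := ofReal_ne_zero.2 hx.ne'
  rw [show c * (x - α) = x * (c * (1 - α * (x : ℂ)⁻¹)) by field_simp, log_ofReal_mul hx hne,
    add_sub_cancel_left]

lemma hasDerivAt_log_mul_ofReal_sub {c γ : ℂ} {x : ℝ} (h : c * (x - γ) ∈ slitPlane) :
    HasDerivAt (fun x : ℝ => log (c * (x - γ))) ((x : ℂ) - γ)⁻¹ x := by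
  refine ((((hasDerivAt_id (x : ℂ)).sub_const γ).const_mul c).comp_ofReal.clog_real
    h).congr_deriv ?_
  rw [mul_one, div_mul_cancel_left₀ (left_ne_zero_of_mul (slitPlane_ne_zero h)), id]

lemma integral_inv_sub_mul_inv_sub (hα : 0 < α.im) (hβ : β.im < 0) :
    ∫ x : ℝ, ((x : ℂ) - α)⁻¹ * ((x : ℂ) - β)⁻¹ = 2 * Real.pi * I / (α - β) := by
  have hαβ : α - β ≠ 0 := fun h => (hβ.trans hα).ne' (by rw [sub_eq_zero.1 h])
  -- `I * (x - α)` and `-I * (x - β)` stay in the right half-plane, away from the cut of `log`.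
  have hd (x : ℝ) : HasDerivAt
      (fun x : ℝ => (log (I * (x - α)) - log (-I * (x - β))) / (α - β))
      (((x : ℂ) - α)⁻¹ * ((x : ℂ) - β)⁻¹) x := by
    refine (((hasDerivAt_log_mul_ofReal_sub (.inl (by simpa))).sub
      (hasDerivAt_log_mul_ofReal_sub (.inl (by simpa)))).div_const _).congr_deriv ?_
    have := ofReal_sub_ne_zero hα.ne' x
    have := ofReal_sub_ne_zero hβ.ne x
    field_simp
    ring
  have hI : I ∈ slitPlane := .inr (by simp)
  have hnegI : -I ∈ slitPlane := .inr (by simp)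
  have htop : Tendsto (fun x : ℝ => (log (I * (x - α)) - log (-I * (x - β))) / (α - β)) atTop
      (𝓝 ((log I - log (-I)) / (α - β))) := by
    simpa using ((tendsto_log_mul_sub_sub_log hI α).sub
      (tendsto_log_mul_sub_sub_log hnegI β)).div_const (α - β)
  have hbot : Tendsto (fun x : ℝ => (log (I * (x - α)) - log (-I * (x - β))) / (α - β)) atBot
      (𝓝 ((log (-I) - log I) / (α - β))) := by
    have h := (((tendsto_log_mul_sub_sub_log hnegI (-α)).sub
      (tendsto_log_mul_sub_sub_log hI (-β))).div_const (α - β)).comp tendsto_neg_atBot_atTop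
    refine h.congr fun x => ?_
    have hneg (c γ : ℂ) : c * (((-x : ℝ) : ℂ) - -γ) = -c * (x - γ) := by
      push_cast
      ring
    simp only [Function.comp_apply, hneg, neg_neg, sub_sub_sub_cancel_right]
  have hint : Integrable fun x : ℝ => ((x : ℂ) - α)⁻¹ * ((x : ℂ) - β)⁻¹ := by
    simpa using integrable_sub_zpow_mul_sub_zpow hα.ne' hβ.ne (-1)
  rw [integral_of_hasDerivAt_of_tendsto hd hint hbot htop, log_I, log_neg_I]
  ring

lemma sub_pow_mul_sub_zpow_div_pow (hα : α.im ≠ 0) (n j : ℕ) (x : ℝ) :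
    ((x : ℂ) - α) ^ j * ((x : ℂ) - β) ^ ((n : ℤ) - j - 1) / ((x : ℂ) - α) ^ (n + 1) =
      ((x : ℂ) - α) ^ ((j : ℤ) - (n + 1)) * ((x : ℂ) - β) ^ (-2 - ((j : ℤ) - (n + 1))) := by
  rw [show -2 - ((j : ℤ) - (n + 1)) = n - j - 1 by ring, zpow_sub₀ (ofReal_sub_ne_zero hα x),
    ← Nat.cast_add_one, zpow_natCast, zpow_natCast, mul_div_right_comm]

lemma integrable_sub_pow_mul_sub_zpow_div_pow (hα : α.im ≠ 0) (hβ : β.im ≠ 0) (n j : ℕ) :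
    Integrable fun x : ℝ =>
      ((x : ℂ) - α) ^ j * ((x : ℂ) - β) ^ ((n : ℤ) - j - 1) / ((x : ℂ) - α) ^ (n + 1) := by
  simpa only [sub_pow_mul_sub_zpow_div_pow hα] using
    integrable_sub_zpow_mul_sub_zpow hα hβ ((j : ℤ) - (n + 1))

lemma integral_sub_pow_mul_sub_zpow_div_pow (hα : 0 < α.im) (hβ : β.im < 0) (n j : ℕ) :
    ∫ x : ℝ, ((x : ℂ) - α) ^ j * ((x : ℂ) - β) ^ ((n : ℤ) - j - 1) / ((x : ℂ) - α) ^ (n + 1) =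
      2 * Real.pi * I / n.factorial *
        iteratedDeriv n (fun z => (z - α) ^ j * (z - β) ^ ((n : ℤ) - j - 1)) α := by
  have hαβ : α ≠ β := fun h => (hβ.trans hα).ne' (by rw [h])
  simp only [sub_pow_mul_sub_zpow_div_pow hα.ne', iteratedDeriv_sub_pow_mul_sub_zpow hαβ]
  rcases eq_or_ne j n with rfl | hjn
  · have hfact : (j.factorial : ℂ) ≠ 0 := Nat.cast_ne_zero.2 j.factorial_ne_zero
    rw [if_pos rfl, div_mul_div_cancel₀ hfact, ← integral_inv_sub_mul_inv_sub hα hβ]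
    simp
  · rw [if_neg hjn, mul_zero,
      integral_sub_zpow_mul_sub_zpow_eq_zero hα.ne' hβ.ne hαβ (by omega)]

end RealLine

theorem stmt0_general {α β : ℂ} (hα : 0 < α.im) (hβ : β.im < 0) (a b : ℕ) (ha : 1 ≤ a)
    (p : Polynomial ℂ) (hdeg : p.natDegree + 2 ≤ a + b) :
    Integrable (fun x : ℝ => p.eval (x : ℂ) / (((x : ℂ) - α) ^ a * ((x : ℂ) - β) ^ b)) ∧
    ∫ x : ℝ, p.eval (x : ℂ) / (((x : ℂ) - α) ^ a * ((x : ℂ) - β) ^ b) =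
      (2 * (Real.pi : ℂ) * I / (Nat.factorial (a - 1) : ℂ)) *
        iteratedDeriv (a - 1) (fun z : ℂ => p.eval z / (z - β) ^ b) α := by
  obtain ⟨n, rfl⟩ := Nat.exists_eq_add_of_le' ha
  have hαβ : α ≠ β := fun h => (hβ.trans hα).ne' (by rw [h])
  obtain ⟨c, hc⟩ := exists_eval_div_pow_eq_sum_zpow (n := n) (b := b) hαβ p (by omega)
  have hsum (x : ℝ) : p.eval (x : ℂ) / (((x : ℂ) - α) ^ (n + 1) * ((x : ℂ) - β) ^ b) =
      ∑ j ∈ Finset.range (n + b), c j *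
        (((x : ℂ) - α) ^ j * ((x : ℂ) - β) ^ ((n : ℤ) - j - 1) / ((x : ℂ) - α) ^ (n + 1)) := by
    rw [mul_comm, ← div_div, hc _ (sub_ne_zero.1 (ofReal_sub_ne_zero hβ.ne x)), Finset.sum_div]
    simp only [mul_div_assoc]
  have hint (j : ℕ) := (integrable_sub_pow_mul_sub_zpow_div_pow hα.ne' hβ.ne n j).const_mul (c j)
  have hg : (fun z => p.eval z / (z - β) ^ b) =ᶠ[𝓝 α] fun z =>
      ∑ j ∈ Finset.range (n + b), c j * ((z - α) ^ j * (z - β) ^ ((n : ℤ) - j - 1)) :=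
    (eventually_ne_nhds hαβ).mono hc
  simp only [hsum, Nat.add_sub_cancel, hg.iteratedDeriv_eq,
    iteratedDeriv_sum_sub_pow_mul_sub_zpow hαβ, Finset.mul_sum]
  refine ⟨integrable_finsetSum _ fun j _ => hint j, ?_⟩
  rw [integral_finsetSum _ fun j _ => hint j]
  simp only [integral_const_mul, integral_sub_pow_mul_sub_zpow_div_pow hα hβ, mul_left_comm]

theorem stmt0 (a b : ℕ) (ha : 1 ≤ a) (hb : 1 ≤ b) (p : Polynomial ℂ)
    (hdeg : p.natDegree + 2 ≤ a + b) :
    Integrable (fun x : ℝ => p.eval (x : ℂ) / (((x : ℂ) - I) ^ a * ((x : ℂ) + I) ^ b)) ∧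
    ∫ x : ℝ, p.eval (x : ℂ) / (((x : ℂ) - I) ^ a * ((x : ℂ) + I) ^ b) =
      (2 * (Real.pi : ℂ) * I / (Nat.factorial (a - 1) : ℂ)) *
        iteratedDeriv (a - 1) (fun z : ℂ => p.eval z / (z + I) ^ b) I := by
  simpa using stmt0_general (α := I) (β := -I) (by simp) (by simp) a b ha p hdeg
end

section
/- Let a, b be natural numbers with a ≥ 1 and b ≥ 1. Then ∫_ℝ 1/((x−i)^a·(x+i)^b) dx = 2πi·(−1)^{a−1}·(2i)^{1−a−b}·C(a+b−2, a−1), where (2i)^{1−a−b} denotes the integer power of 2i with exponent 1−a−b. -/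
open MeasureTheory Complex

/-!
Partial fractions, `1 / ((x - z) * (x - w)) = (1 / (x - z) - 1 / (x - w)) / (z - w)`, turn the
integral into a solution of Pascal's recursion. The pure powers of order at least two on its
boundary have primitives vanishing at `±∞`, so they integrate to zero and everything is determined
by the case of two simple poles. There `log (x - z) - log (x - w)` is a primitive of
`1 / (x - z) - 1 / (x - w)`; along the real line `x - z` stays below and `x - w` above the branch
cut of the logarithm, which is why the primitive gains `2πi` between `-∞` and `+∞`.
-/

lemma one_div_sub_pow_succ_mul_pow_succ {K : Type*} [Field K] {x z w : K} (hxz : x - z ≠ 0)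
    (hxw : x - w ≠ 0) (hzw : z - w ≠ 0) (p q : ℕ) :
    1 / ((x - z) ^ (p + 1) * (x - w) ^ (q + 1)) =
      (1 / ((x - z) ^ (p + 1) * (x - w) ^ q) - 1 / ((x - z) ^ p * (x - w) ^ (q + 1))) /
        (z - w) := by
  field_simp
  ring

section PolesOffRealLine

open Asymptotics Bornology Filter Topology

variable {z w : ℂ}

lemma ofReal_sub_ne_zero_of_im_ne_zero (hz : z.im ≠ 0) (x : ℝ) : (x : ℂ) - z ≠ 0 := by
  refine sub_ne_zero.2 fun h => hz ?_
  rw [← h, ofReal_im]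

lemma ofReal_sub_mem_slitPlane (hz : z.im ≠ 0) (x : ℝ) : (x : ℂ) - z ∈ slitPlane := by
  simp [mem_slitPlane_iff, hz]

lemma ofReal_sub_isTheta_cobounded (z : ℂ) :
    (fun x : ℝ => (x : ℂ) - z) =Θ[cobounded ℝ] fun x => x := by
  have hx : (fun x : ℝ => (x : ℂ)) =Θ[cobounded ℝ] fun x => x :=
    .of_norm_eventuallyEq_norm <| .of_forall fun x => norm_real x
  have hz : (fun _ : ℝ => -z) =o[cobounded ℝ] fun x => x := isLittleO_const_id_cobounded (-z)
  simpa only [sub_eq_add_neg, Pi.add_def] using hx.add_isLittleO hz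

lemma inv_pow_isBigO_inv_one_add_sq {n : ℕ} (hn : 2 ≤ n) :
    (fun x : ℝ => (x ^ n)⁻¹) =O[cobounded ℝ] fun x => (1 + x ^ 2)⁻¹ := by
  refine IsBigO.of_bound 2 ?_
  filter_upwards [tendsto_norm_cobounded_atTop.eventually_ge_atTop (1 : ℝ)] with x hx
  have hone : 1 ≤ ‖x‖ ^ 2 := one_le_pow₀ hx
  have hpow : ‖x‖ ^ 2 ≤ ‖x‖ ^ n := pow_le_pow_right₀ hx hn
  have hsq : ‖x‖ ^ 2 = x ^ 2 := by rw [Real.norm_eq_abs, sq_abs]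
  rw [norm_inv, norm_inv, norm_pow, Real.norm_of_nonneg (by positivity : 0 ≤ 1 + x ^ 2),
    ← div_eq_mul_inv, inv_le_comm₀ (by positivity) (by positivity), inv_div]
  linarith

lemma integrable_one_div_ofReal_sub_pow_mul_pow (hz : z.im ≠ 0) (hw : w.im ≠ 0) {p q : ℕ}
    (hpq : 2 ≤ p + q) : Integrable fun x : ℝ => 1 / (((x : ℂ) - z) ^ p * ((x : ℂ) - w) ^ q) := by
  have hcont : Continuous fun x : ℝ => 1 / (((x : ℂ) - z) ^ p * ((x : ℂ) - w) ^ q) := by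
    refine continuous_const.div (by fun_prop) fun x => ?_
    exact mul_ne_zero (pow_ne_zero p (ofReal_sub_ne_zero_of_im_ne_zero hz x))
      (pow_ne_zero q (ofReal_sub_ne_zero_of_im_ne_zero hw x))
  have hdecay : (fun x : ℝ => 1 / (((x : ℂ) - z) ^ p * ((x : ℂ) - w) ^ q)) =O[cobounded ℝ]
      fun x => (x ^ (p + q))⁻¹ := by
    simpa only [one_div, pow_add] using (((ofReal_sub_isTheta_cobounded z).pow p).mul
      ((ofReal_sub_isTheta_cobounded w).pow q)).inv.isBigO
  refine hcont.locallyIntegrable.integrable_of_isBigO_cocompact ?_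
    (integrable_inv_one_add_sq.integrableAtFilter _)
  rw [← Metric.cobounded_eq_cocompact]
  exact hdecay.trans (inv_pow_isBigO_inv_one_add_sq hpq)

lemma tendsto_inv_ofReal_sub_cobounded (z : ℂ) :
    Tendsto (fun x : ℝ => ((x : ℂ) - z)⁻¹) (cobounded ℝ) (𝓝 0) :=
  (ofReal_sub_isTheta_cobounded z).inv.tendsto_zero_iff.2 tendsto_inv₀_cobounded

lemma hasDerivAt_inv_ofReal_sub_pow {x : ℝ} (hxz : (x : ℂ) - z ≠ 0) (n : ℕ) :
    HasDerivAt (fun x : ℝ => (((x : ℂ) - z)⁻¹) ^ n) (-n / ((x : ℂ) - z) ^ (n + 1)) x := by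
  refine ((((hasDerivAt_id (x : ℂ)).sub_const z).inv hxz).pow n).comp_ofReal.congr_deriv ?_
  cases n with
  | zero => simp
  | succ n =>
    simp only [id_eq, Nat.add_sub_cancel, inv_pow, Pi.inv_apply]
    field_simp
    ring

theorem integral_one_div_ofReal_sub_pow_eq_zero (hz : z.im ≠ 0) {n : ℕ} (hn : 2 ≤ n) :
    ∫ x : ℝ, 1 / ((x : ℂ) - z) ^ n = 0 := by
  obtain ⟨k, rfl⟩ : ∃ k, n = k + 1 := Nat.exists_eq_add_of_le' (by omega)
  have hk : (-k : ℂ) ≠ 0 := neg_ne_zero.2 (Nat.cast_ne_zero.2 (by omega))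
  have hderiv (x : ℝ) : HasDerivAt (fun x : ℝ => (((x : ℂ) - z)⁻¹) ^ k / (-k))
      (1 / ((x : ℂ) - z) ^ (k + 1)) x :=
    ((hasDerivAt_inv_ofReal_sub_pow (ofReal_sub_ne_zero_of_im_ne_zero hz x) k).div_const
      (-k : ℂ)).congr_deriv <| by rw [div_right_comm, div_self hk]
  have hint : Integrable fun x : ℝ => 1 / ((x : ℂ) - z) ^ (k + 1) := by
    simpa using integrable_one_div_ofReal_sub_pow_mul_pow hz hz (q := 0) hn
  have hlim : Tendsto (fun x : ℝ => (((x : ℂ) - z)⁻¹) ^ k / (-k)) (cobounded ℝ) (𝓝 0) := by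
    simpa [show k ≠ 0 by omega] using
      ((tendsto_inv_ofReal_sub_cobounded z).pow k).div_const (-k : ℂ)
  simpa using integral_of_hasDerivAt_of_tendsto hderiv hint
    (hlim.mono_left IsOrderBornology.atBot_le_cobounded)
    (hlim.mono_left IsOrderBornology.atTop_le_cobounded)

lemma log_ofReal_sub_sub_log_abs {x : ℝ} (hx : x ≠ 0) (hxz : (x : ℂ) - z ≠ 0) :
    log (x - z) - Real.log |x| = log ((x - z) / |x|) := by
  have habs : ((|x| : ℝ) : ℂ) ≠ 0 := ofReal_ne_zero.2 (abs_ne_zero.2 hx)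
  have hne := div_ne_zero hxz habs
  rw [sub_eq_iff_eq_add', ← log_ofReal_mul (abs_pos.2 hx) hne, mul_div_cancel₀ _ habs]

lemma tendsto_ofReal_sub_div_abs_atTop (z : ℂ) :
    Tendsto (fun x : ℝ => ((x : ℂ) - z) / |x|) atTop (𝓝 1) := by
  have hinv : Tendsto (fun x : ℝ => (x : ℂ)⁻¹) atTop (𝓝 0) := by
    simpa using (tendsto_inv_ofReal_sub_cobounded 0).mono_left IsOrderBornology.atTop_le_cobounded
  have hlim : Tendsto (fun x : ℝ => 1 - z * (x : ℂ)⁻¹) atTop (𝓝 1) := by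
    simpa using (hinv.const_mul z).const_sub 1
  refine hlim.congr' ?_
  filter_upwards [eventually_gt_atTop 0] with x hx
  rw [abs_of_pos hx, sub_div, div_self (ofReal_ne_zero.2 hx.ne'), div_eq_mul_inv]

lemma tendsto_ofReal_sub_div_abs_atBot (z : ℂ) :
    Tendsto (fun x : ℝ => ((x : ℂ) - z) / |x|) atBot (𝓝 (-1)) := by
  refine ((tendsto_ofReal_sub_div_abs_atTop (-z)).comp tendsto_neg_atBot_atTop).neg.congr
    fun x => ?_
  simp only [Function.comp_apply, abs_neg, ofReal_neg]
  ring

lemma im_ofReal_sub_div_abs (z : ℂ) (x : ℝ) : (((x : ℂ) - z) / |x|).im = -z.im / |x| := by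
  simp [div_ofReal_im]

lemma ofReal_sub_ne_zero_of_ne_re {x : ℝ} (hx : x ≠ z.re) : (x : ℂ) - z ≠ 0 := by
  refine sub_ne_zero.2 fun h => hx ?_
  rw [← h, ofReal_re]

lemma tendsto_log_ofReal_sub_sub_log_abs_atTop (z : ℂ) :
    Tendsto (fun x : ℝ => log (x - z) - Real.log |x|) atTop (𝓝 0) := by
  have hlim := (tendsto_ofReal_sub_div_abs_atTop z).clog one_mem_slitPlane
  rw [log_one] at hlim
  refine hlim.congr' ?_
  filter_upwards [eventually_ne_atTop 0, eventually_ne_atTop z.re] with x hx hxz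
  exact (log_ofReal_sub_sub_log_abs hx (ofReal_sub_ne_zero_of_ne_re hxz)).symm

lemma tendsto_log_ofReal_sub_sub_log_abs_atBot_of_im_pos (hz : 0 < z.im) :
    Tendsto (fun x : ℝ => log (x - z) - Real.log |x|) atBot (𝓝 (-(Real.pi * I))) := by
  have hbelow : Tendsto (fun x : ℝ => ((x : ℂ) - z) / |x|) atBot (𝓝[{u | u.im < 0}] (-1)) := by
    refine tendsto_nhdsWithin_iff.2 ⟨tendsto_ofReal_sub_div_abs_atBot z, ?_⟩
    filter_upwards [eventually_ne_atBot 0] with x hx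
    refine (im_ofReal_sub_div_abs z x).trans_lt ?_
    exact div_neg_of_neg_of_pos (neg_neg_of_pos hz) (abs_pos.2 hx)
  have hlog := tendsto_log_nhdsWithin_im_neg_of_re_neg_of_im_zero (z := -1) (by simp) (by simp)
  rw [norm_neg, norm_one, Real.log_one, ofReal_zero, zero_sub] at hlog
  refine (hlog.comp hbelow).congr' ?_
  filter_upwards [eventually_ne_atBot 0] with x hx
  exact (log_ofReal_sub_sub_log_abs hx (ofReal_sub_ne_zero_of_im_ne_zero hz.ne' x)).symm

lemma tendsto_log_ofReal_sub_sub_log_abs_atBot_of_im_nonpos (hz : z.im ≤ 0) :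
    Tendsto (fun x : ℝ => log (x - z) - Real.log |x|) atBot (𝓝 (Real.pi * I)) := by
  have habove : Tendsto (fun x : ℝ => ((x : ℂ) - z) / |x|) atBot (𝓝[{u | 0 ≤ u.im}] (-1)) := by
    refine tendsto_nhdsWithin_iff.2 ⟨tendsto_ofReal_sub_div_abs_atBot z, .of_forall fun x => ?_⟩
    exact (div_nonneg (neg_nonneg.2 hz) (abs_nonneg x)).trans_eq (im_ofReal_sub_div_abs z x).symm
  have hlog := tendsto_log_nhdsWithin_im_nonneg_of_re_neg_of_im_zero (z := -1) (by simp) (by simp)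
  rw [norm_neg, norm_one, Real.log_one, ofReal_zero, zero_add] at hlog
  refine (hlog.comp habove).congr' ?_
  filter_upwards [eventually_ne_atBot 0, eventually_ne_atBot z.re] with x hx hxz
  exact (log_ofReal_sub_sub_log_abs hx (ofReal_sub_ne_zero_of_ne_re hxz)).symm

lemma hasDerivAt_log_ofReal_sub (hz : z.im ≠ 0) (x : ℝ) :
    HasDerivAt (fun x : ℝ => log (x - z)) (1 / ((x : ℂ) - z)) x :=
  (((hasDerivAt_id (x : ℂ)).sub_const z).clog (ofReal_sub_mem_slitPlane hz x)).comp_ofReal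

theorem integral_one_div_ofReal_sub_mul_sub (hz : 0 < z.im) (hw : w.im < 0) :
    ∫ x : ℝ, 1 / (((x : ℂ) - z) * ((x : ℂ) - w)) = 2 * Real.pi * I / (z - w) := by
  have hzw : z - w ≠ 0 := sub_ne_zero.2 fun h => (hw.trans hz).ne' (congrArg im h)
  have hderiv (x : ℝ) : HasDerivAt (fun x : ℝ => (log (x - z) - log (x - w)) / (z - w))
      (1 / (((x : ℂ) - z) * ((x : ℂ) - w))) x := by
    have hsplit := one_div_sub_pow_succ_mul_pow_succ
      (ofReal_sub_ne_zero_of_im_ne_zero hz.ne' x) (ofReal_sub_ne_zero_of_im_ne_zero hw.ne x) hzw 0 0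
    simp only [zero_add, pow_one, pow_zero, mul_one, one_mul] at hsplit
    rw [hsplit]
    exact ((hasDerivAt_log_ofReal_sub hz.ne' x).sub
      (hasDerivAt_log_ofReal_sub hw.ne x)).div_const (z - w)
  have hint : Integrable fun x : ℝ => 1 / (((x : ℂ) - z) * ((x : ℂ) - w)) := by
    simpa using integrable_one_div_ofReal_sub_pow_mul_pow hz.ne' hw.ne (p := 1) (q := 1) le_rfl
  have htop := ((tendsto_log_ofReal_sub_sub_log_abs_atTop z).sub
    (tendsto_log_ofReal_sub_sub_log_abs_atTop w)).div_const (z - w)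
  have hbot := ((tendsto_log_ofReal_sub_sub_log_abs_atBot_of_im_pos hz).sub
    (tendsto_log_ofReal_sub_sub_log_abs_atBot_of_im_nonpos hw.le)).div_const (z - w)
  simp only [sub_sub_sub_cancel_right] at htop hbot
  rw [integral_of_hasDerivAt_of_tendsto hderiv hint hbot htop]
  ring

lemma integral_one_div_ofReal_sub_pow_succ_mul_pow_succ (hz : z.im ≠ 0) (hw : w.im ≠ 0)
    (hzw : z ≠ w) {p q : ℕ} (hpq : 1 ≤ p + q) :
    ∫ x : ℝ, 1 / (((x : ℂ) - z) ^ (p + 1) * ((x : ℂ) - w) ^ (q + 1)) =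
      ((∫ x : ℝ, 1 / (((x : ℂ) - z) ^ (p + 1) * ((x : ℂ) - w) ^ q)) -
        ∫ x : ℝ, 1 / (((x : ℂ) - z) ^ p * ((x : ℂ) - w) ^ (q + 1))) / (z - w) := by
  rw [← integral_sub (integrable_one_div_ofReal_sub_pow_mul_pow hz hw (by omega))
    (integrable_one_div_ofReal_sub_pow_mul_pow hz hw (by omega)), ← integral_div]
  exact integral_congr_ae <| .of_forall fun x => one_div_sub_pow_succ_mul_pow_succ
    (ofReal_sub_ne_zero_of_im_ne_zero hz x) (ofReal_sub_ne_zero_of_im_ne_zero hw x)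
    (sub_ne_zero.2 hzw) p q

theorem integral_one_div_ofReal_sub_pow_succ_mul_pow_succ_eq_choose (hz : 0 < z.im)
    (hw : w.im < 0) (m n : ℕ) :
    ∫ x : ℝ, 1 / (((x : ℂ) - z) ^ (m + 1) * ((x : ℂ) - w) ^ (n + 1)) =
      2 * Real.pi * I * (-1) ^ m * (m + n).choose m / (z - w) ^ (m + n + 1) := by
  have hzw : z ≠ w := fun h => (hw.trans hz).ne' (congrArg im h)
  have hpascal {p q : ℕ} (hpq : 1 ≤ p + q) :=
    integral_one_div_ofReal_sub_pow_succ_mul_pow_succ hz.ne' hw.ne hzw hpq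
  have hzw' : z - w ≠ 0 := sub_ne_zero.2 hzw
  induction m generalizing n with
  | zero =>
    induction n with
    | zero => simpa using integral_one_div_ofReal_sub_mul_sub hz hw
    | succ n ihn =>
      have hpure : ∫ x : ℝ, 1 / (((x : ℂ) - z) ^ 0 * ((x : ℂ) - w) ^ (n + 1 + 1)) = 0 := by
        simpa using integral_one_div_ofReal_sub_pow_eq_zero hw.ne (n := n + 2) (by omega)
      rw [hpascal (by omega), hpure, ihn]
      simp only [zero_add, Nat.choose_zero_right]
      field_simp
      ring
  | succ m ihm =>
    induction n with
    | zero =>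
      have hpure : ∫ x : ℝ, 1 / (((x : ℂ) - z) ^ (m + 1 + 1) * ((x : ℂ) - w) ^ 0) = 0 := by
        simpa using integral_one_div_ofReal_sub_pow_eq_zero hz.ne' (n := m + 2) (by omega)
      rw [hpascal (by omega), hpure, ihm]
      simp only [add_zero, Nat.choose_self]
      field_simp
      ring
    | succ n ihn =>
      have hchoose : ((m + 1 + (n + 1)).choose (m + 1) : ℂ) =
          (m + (n + 1)).choose m + (m + 1 + n).choose (m + 1) := by
        rw [← Nat.cast_add, ← add_assoc, ← add_assoc, add_right_comm m 1 n, Nat.choose_succ_succ']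
      rw [hpascal (by omega), ihn, ihm, hchoose]
      field_simp
      ring

theorem stmt2_general (hz : 0 < z.im) (hw : w.im < 0) {a b : ℕ} (ha : 1 ≤ a) (hb : 1 ≤ b) :
    ∫ x : ℝ, 1 / (((x : ℂ) - z) ^ a * ((x : ℂ) - w) ^ b) =
      2 * (Real.pi : ℂ) * I * (-1) ^ (a - 1) * (z - w) ^ ((1 : ℤ) - (a : ℤ) - (b : ℤ)) *
        ((a + b - 2).choose (a - 1) : ℂ) := by
  obtain ⟨m, rfl⟩ := Nat.exists_eq_add_of_le' ha
  obtain ⟨n, rfl⟩ := Nat.exists_eq_add_of_le' hb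
  have hexp : (1 : ℤ) - (m + 1 : ℕ) - (n + 1 : ℕ) = -(m + n + 1 : ℕ) := by omega
  have hsum : m + 1 + (n + 1) - 2 = m + n := by omega
  rw [integral_one_div_ofReal_sub_pow_succ_mul_pow_succ_eq_choose hz hw, hexp, hsum, zpow_neg,
    zpow_natCast, Nat.add_sub_cancel]
  ring

end PolesOffRealLine

theorem stmt2 (a b : ℕ) (ha : 1 ≤ a) (hb : 1 ≤ b) :
    ∫ x : ℝ, 1 / (((x : ℂ) - I) ^ a * ((x : ℂ) + I) ^ b) =
      2 * (Real.pi : ℂ) * I * (-1) ^ (a - 1) * (2 * I) ^ ((1 : ℤ) - (a : ℤ) - (b : ℤ)) *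
        ((a + b - 2).choose (a - 1) : ℂ) := by
  simpa only [sub_neg_eq_add, ← two_mul] using
    stmt2_general (z := I) (w := -I) (by simp) (by simp) ha hb
end

section
/- Let m be a natural number with m ≥ 1. Then ∫_ℝ ((4m−2)·x² − 2)/((x−i)^{m+2}·(x+i)^{m+1}) dx = 2πi·4^{−(m+1)}·( −(4m−2)·(C(2m+1, m+1) − 4·C(2m, m) + 4·C(2m−1, m−1)) − 2·C(2m+1, m+1) ), where 4^{−(m+1)} denotes the integer power of 4 with exponent −(m+1). -/
open MeasureTheory Complex
open Filter Topology Asymptotics Bornology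

/-!
For `a` in the upper and `b` in the lower half-plane put
`K p q = ∫ dx / ((x - a) ^ p * (x - b) ^ q)`. The identity `(x - b) - (x - a) = a - b` gives the
Pascal-type recursion `(a - b) * K (p + 1) (q + 1) = K (p + 1) q - K p (q + 1)`, in which `K p 0`
and `K 0 q` vanish for `p, q ≥ 2`. Hence `K (p + 1) (q + 1)` is `K 1 1` times
`(-1) ^ p * (p + q).choose p / (a - b) ^ (p + q)`, and `(a - b) * K 1 1 = 2πi` is the
increment of `log (x - a) - log (x - b)` along the real line. Finally
`α * x ^ 2 + β = α * (x - i) * (x + i) + (β - α)` writes an integral with quadratic numerator over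
`(x - i) ^ (m + 2) * (x + i) ^ (m + 1)` as a combination of `K (m + 1) m` and `K (m + 2) (m + 1)`.
-/

section LinearFactor

variable {a : ℂ}

lemma ofReal_sub_mem_slitPlane_s5 (ha : a.im ≠ 0) (x : ℝ) : (x : ℂ) - a ∈ slitPlane :=
  mem_slitPlane_iff.mpr (.inr (by simpa using ha))

lemma ofReal_sub_ne_zero_s5 (ha : a.im ≠ 0) (x : ℝ) : (x : ℂ) - a ≠ 0 :=
  slitPlane_ne_zero (ofReal_sub_mem_slitPlane_s5 ha x)

lemma one_add_norm_le_mul_norm_ofReal_sub (ha : a.im ≠ 0) (x : ℝ) :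
    1 + ‖x‖ ≤ (1 + (1 + ‖a‖) / |a.im|) * ‖(x : ℂ) - a‖ := by
  have him : |a.im| ≤ ‖(x : ℂ) - a‖ := by simpa using abs_im_le_norm ((x : ℂ) - a)
  have htri : ‖x‖ ≤ ‖(x : ℂ) - a‖ + ‖a‖ := by simpa using norm_le_norm_sub_add (x : ℂ) a
  have hconst : 1 + ‖a‖ ≤ (1 + ‖a‖) / |a.im| * ‖(x : ℂ) - a‖ := by
    rw [div_mul_eq_mul_div, le_div_iff₀ (abs_pos.mpr ha)]
    gcongr
  linarith

lemma isBigO_inv_ofReal_sub (ha : a.im ≠ 0) :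
    (fun x : ℝ ↦ ((x : ℂ) - a)⁻¹) =O[⊤] fun x : ℝ ↦ (1 + ‖x‖)⁻¹ := by
  refine .of_bound (1 + (1 + ‖a‖) / |a.im|) (.of_forall fun x ↦ ?_)
  have hpos : 0 < ‖(x : ℂ) - a‖ := norm_pos_iff.mpr (ofReal_sub_ne_zero_s5 ha x)
  rw [norm_inv, norm_inv, Real.norm_of_nonneg (by positivity : (0 : ℝ) ≤ 1 + ‖x‖),
    ← div_eq_mul_inv, le_div_iff₀ (by positivity), inv_mul_le_iff₀ hpos, mul_comm]
  exact one_add_norm_le_mul_norm_ofReal_sub ha x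

lemma tendsto_inv_ofReal_sub_pow_cobounded (a : ℂ) (n : ℕ) :
    Tendsto (fun x : ℝ ↦ (((x : ℂ) - a) ^ (n + 1))⁻¹) (cobounded ℝ) (𝓝 0) := by
  have hsub : Tendsto (fun x : ℝ ↦ (x : ℂ) - a) (cobounded ℝ) (cobounded ℂ) :=
    (tendsto_sub_const_cobounded a).comp (RCLike.tendsto_ofReal_cobounded_cobounded ℂ)
  simpa only [Function.comp_def, inv_pow, zero_pow n.succ_ne_zero] using
    (tendsto_inv₀_cobounded.comp hsub).pow (n + 1)

end LinearFactor

section PartialFractions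

variable {a b : ℂ}

lemma integrable_inv_sub_pow_mul_sub_pow (ha : a.im ≠ 0) (hb : b.im ≠ 0) {p q : ℕ}
    (hpq : 2 ≤ p + q) :
    Integrable fun x : ℝ ↦ (((x : ℂ) - a) ^ p * ((x : ℂ) - b) ^ q)⁻¹ := by
  have hcont : Continuous fun x : ℝ ↦ (((x : ℂ) - a) ^ p * ((x : ℂ) - b) ^ q)⁻¹ :=
    .inv₀ (by fun_prop) fun x ↦ mul_ne_zero (pow_ne_zero _ (ofReal_sub_ne_zero_s5 ha x))
      (pow_ne_zero _ (ofReal_sub_ne_zero_s5 hb x))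
  have hdecay : (fun x : ℝ ↦ (((x : ℂ) - a) ^ p * ((x : ℂ) - b) ^ q)⁻¹) =O[⊤]
      fun x : ℝ ↦ (1 + ‖x‖)⁻¹ ^ (p + q) := by
    simpa only [mul_inv, inv_pow, pow_add] using
      ((isBigO_inv_ofReal_sub ha).pow p).mul ((isBigO_inv_ofReal_sub hb).pow q)
  have hint : Integrable fun x : ℝ ↦ (1 + ‖x‖)⁻¹ ^ (p + q) := by
    have hrank : (Module.finrank ℝ ℝ : ℝ) < ((p + q : ℕ) : ℝ) := by
      rw [Module.finrank_self]
      exact_mod_cast hpq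
    refine (integrable_one_add_norm hrank).congr (.of_forall fun x ↦ ?_)
    simp only [Real.rpow_neg (by positivity : (0 : ℝ) ≤ 1 + ‖x‖), Real.rpow_natCast, inv_pow]
  exact hdecay.integrable hcont.aestronglyMeasurable hint

lemma integral_inv_sub_pow (ha : a.im ≠ 0) (n : ℕ) :
    ∫ x : ℝ, (((x : ℂ) - a) ^ (n + 2))⁻¹ = 0 := by
  have hderiv (x : ℝ) : HasDerivAt (fun x : ℝ ↦ (((x : ℂ) - a) ^ (n + 1))⁻¹)
      (-(n + 1) * (((x : ℂ) - a) ^ (n + 2))⁻¹) x := by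
    have hx := ofReal_sub_ne_zero_s5 ha x
    have hsub : HasDerivAt (fun x : ℝ ↦ (x : ℂ) - a) 1 x :=
      (hasDerivAt_id x).ofReal_comp.sub_const a
    refine ((hsub.fun_pow (n + 1)).fun_inv (pow_ne_zero _ hx)).congr_deriv ?_
    rw [Nat.add_sub_cancel]
    push_cast
    field_simp
    ring
  have hint : Integrable fun x : ℝ ↦ (((x : ℂ) - a) ^ (n + 2))⁻¹ := by
    simpa using integrable_inv_sub_pow_mul_sub_pow ha ha (p := n + 2) (q := 0) (by lia)
  have hlim := tendsto_inv_ofReal_sub_pow_cobounded a n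
  have hzero := integral_of_hasDerivAt_of_tendsto hderiv (hint.const_mul _)
    (hlim.mono_left IsOrderBornology.atBot_le_cobounded)
    (hlim.mono_left IsOrderBornology.atTop_le_cobounded)
  rw [integral_const_mul, sub_zero] at hzero
  exact (mul_eq_zero.mp hzero).resolve_left (neg_ne_zero.mpr (Nat.cast_add_one_ne_zero n))

lemma sub_mul_integral_inv_sub_pow_mul_sub_pow (ha : a.im ≠ 0) (hb : b.im ≠ 0) {p q : ℕ}
    (hpq : 1 ≤ p + q) :
    (a - b) * ∫ x : ℝ, (((x : ℂ) - a) ^ (p + 1) * ((x : ℂ) - b) ^ (q + 1))⁻¹ =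
      (∫ x : ℝ, (((x : ℂ) - a) ^ (p + 1) * ((x : ℂ) - b) ^ q)⁻¹) -
        ∫ x : ℝ, (((x : ℂ) - a) ^ p * ((x : ℂ) - b) ^ (q + 1))⁻¹ := by
  rw [← integral_const_mul, ← integral_sub
    (integrable_inv_sub_pow_mul_sub_pow ha hb (by lia))
    (integrable_inv_sub_pow_mul_sub_pow ha hb (by lia))]
  congr 1 with x
  have hxa := ofReal_sub_ne_zero_s5 ha x
  have hxb := ofReal_sub_ne_zero_s5 hb x
  field_simp
  ring

end PartialFractions

section Logarithm

variable {a b z : ℂ}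

lemma log_neg_of_im_pos (hz : 0 < z.im) : log (-z) = log z - Real.pi * I := by
  rw [log, log, norm_neg, arg_neg_eq_arg_sub_pi_of_im_pos hz]
  push_cast
  ring

lemma log_neg_of_im_neg (hz : z.im < 0) : log (-z) = log z + Real.pi * I := by
  rw [log, log, norm_neg, arg_neg_eq_arg_add_pi_of_im_neg hz]
  push_cast
  ring

lemma tendsto_log_ofReal_sub_sub_log (a : ℂ) :
    Tendsto (fun x : ℝ ↦ log ((x : ℂ) - a) - Real.log x) atTop (𝓝 0) := by
  have hquot : Tendsto (fun x : ℝ ↦ 1 - a * (x : ℂ)⁻¹) atTop (𝓝 1) := by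
    have hinv : Tendsto (fun x : ℝ ↦ (x : ℂ)⁻¹) atTop (𝓝 0) :=
      tendsto_inv₀_cobounded.comp (RCLike.tendsto_ofReal_atTop_cobounded ℂ)
    simpa only [mul_zero, sub_zero] using (hinv.const_mul a).const_sub 1
  have hlog : Tendsto (fun x : ℝ ↦ log (1 - a * (x : ℂ)⁻¹)) atTop (𝓝 0) := by
    simpa only [log_one] using hquot.clog one_mem_slitPlane
  refine hlog.congr' ?_
  filter_upwards [eventually_gt_atTop 0, hquot.eventually_ne one_ne_zero] with x hx hne
  have hfac : (x : ℂ) - a = x * (1 - a * (x : ℂ)⁻¹) := by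
    have hx' : (x : ℂ) ≠ 0 := ofReal_ne_zero.mpr hx.ne'
    field_simp
  rw [hfac, log_ofReal_mul hx hne, add_sub_cancel_left]

lemma tendsto_log_ofReal_sub_sub_log_ofReal_sub_atTop (a b : ℂ) :
    Tendsto (fun x : ℝ ↦ log ((x : ℂ) - a) - log ((x : ℂ) - b)) atTop (𝓝 0) := by
  simpa only [sub_sub_sub_cancel_right, sub_zero] using
    (tendsto_log_ofReal_sub_sub_log a).sub (tendsto_log_ofReal_sub_sub_log b)

lemma tendsto_log_ofReal_sub_sub_log_ofReal_sub_atBot (ha : 0 < a.im) (hb : b.im < 0) :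
    Tendsto (fun x : ℝ ↦ log ((x : ℂ) - a) - log ((x : ℂ) - b)) atBot
      (𝓝 (-(2 * Real.pi * I))) := by
  have hreflect : Tendsto
      (fun x : ℝ ↦ log (((-x : ℝ) : ℂ) - -a) - log (((-x : ℝ) : ℂ) - -b) - 2 * Real.pi * I)
      atBot (𝓝 (-(2 * Real.pi * I))) := by
    simpa only [Function.comp_def, zero_sub] using
      ((tendsto_log_ofReal_sub_sub_log_ofReal_sub_atTop (-a) (-b)).comp
        tendsto_neg_atBot_atTop).sub_const (2 * Real.pi * I)
  refine hreflect.congr fun x ↦ ?_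
  -- `x - a` and `x - b` lie on opposite sides of the branch cut, so negating them shifts the two
  -- logarithms in opposite directions; the shifts add up in the difference.
  have hlog_a : log ((x : ℂ) - a) = log (a - x) - Real.pi * I := by
    rw [← neg_sub, log_neg_of_im_pos (by simpa using ha)]
  have hlog_b : log ((x : ℂ) - b) = log (b - x) + Real.pi * I := by
    rw [← neg_sub, log_neg_of_im_neg (by simpa using hb)]
  rw [hlog_a, hlog_b, ofReal_neg, neg_sub_neg, neg_sub_neg]
  ring

lemma hasDerivAt_log_ofReal_sub_s5 (ha : a.im ≠ 0) (x : ℝ) :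
    HasDerivAt (fun x : ℝ ↦ log ((x : ℂ) - a)) ((x : ℂ) - a)⁻¹ x := by
  rw [← one_div]
  exact ((hasDerivAt_id x).ofReal_comp.sub_const a).clog_real (ofReal_sub_mem_slitPlane_s5 ha x)

end Logarithm

section HalfPlanes

variable {a b : ℂ}

lemma sub_mul_integral_inv_sub_mul_sub (ha : 0 < a.im) (hb : b.im < 0) :
    (a - b) * ∫ x : ℝ, (((x : ℂ) - a) * ((x : ℂ) - b))⁻¹ = 2 * Real.pi * I := by
  have hderiv (x : ℝ) : HasDerivAt (fun x : ℝ ↦ log ((x : ℂ) - a) - log ((x : ℂ) - b))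
      ((a - b) * (((x : ℂ) - a) * ((x : ℂ) - b))⁻¹) x := by
    have hxa := ofReal_sub_ne_zero_s5 ha.ne' x
    have hxb := ofReal_sub_ne_zero_s5 hb.ne x
    refine ((hasDerivAt_log_ofReal_sub_s5 ha.ne' x).sub
      (hasDerivAt_log_ofReal_sub_s5 hb.ne x)).congr_deriv ?_
    field_simp
    ring
  have hint : Integrable fun x : ℝ ↦ (((x : ℂ) - a) * ((x : ℂ) - b))⁻¹ := by
    simpa only [pow_one] using
      integrable_inv_sub_pow_mul_sub_pow ha.ne' hb.ne (p := 1) (q := 1) le_rfl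
  rw [← integral_const_mul, integral_of_hasDerivAt_of_tendsto hderiv (hint.const_mul _)
    (tendsto_log_ofReal_sub_sub_log_ofReal_sub_atBot ha hb)
    (tendsto_log_ofReal_sub_sub_log_ofReal_sub_atTop a b), zero_sub, neg_neg]

lemma sub_ne_zero_of_im_pos_of_im_neg (ha : 0 < a.im) (hb : b.im < 0) : a - b ≠ 0 :=
  sub_ne_zero.mpr fun h ↦ (hb.trans ha).ne (congrArg im h).symm

lemma integral_inv_sub_mul_sub_pow (ha : 0 < a.im) (hb : b.im < 0) (q : ℕ) :
    ∫ x : ℝ, (((x : ℂ) - a) * ((x : ℂ) - b) ^ (q + 1))⁻¹ =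
      2 * Real.pi * I / (a - b) ^ (q + 1) := by
  have hab := sub_ne_zero_of_im_pos_of_im_neg ha hb
  induction q with
  | zero => simpa [eq_div_iff hab, mul_comm] using sub_mul_integral_inv_sub_mul_sub ha hb
  | succ q ih =>
    have hrec := sub_mul_integral_inv_sub_pow_mul_sub_pow ha.ne' hb.ne (p := 0) (q := q + 1)
      (by lia)
    simp only [zero_add, pow_one, pow_zero, one_mul, ih, integral_inv_sub_pow hb.ne,
      sub_zero] at hrec
    rw [pow_succ _ (q + 1), ← div_div, ← hrec, mul_div_cancel_left₀ _ hab]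

lemma integral_inv_sub_pow_mul_sub (ha : 0 < a.im) (hb : b.im < 0) (p : ℕ) :
    ∫ x : ℝ, (((x : ℂ) - a) ^ (p + 1) * ((x : ℂ) - b))⁻¹ =
      2 * Real.pi * I * (-1) ^ p / (a - b) ^ (p + 1) := by
  have hab := sub_ne_zero_of_im_pos_of_im_neg ha hb
  induction p with
  | zero => simpa [eq_div_iff hab, mul_comm] using sub_mul_integral_inv_sub_mul_sub ha hb
  | succ p ih =>
    have hrec := sub_mul_integral_inv_sub_pow_mul_sub_pow ha.ne' hb.ne (p := p + 1) (q := 0)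
      (by lia)
    simp only [zero_add, pow_one, pow_zero, mul_one, ih, integral_inv_sub_pow ha.ne',
      zero_sub] at hrec
    rw [pow_succ _ (p + 1), ← div_div, pow_succ, mul_neg_one, mul_neg, neg_div, ← hrec,
      mul_div_cancel_left₀ _ hab]

theorem integral_inv_sub_pow_mul_sub_pow (ha : 0 < a.im) (hb : b.im < 0) (p q : ℕ) :
    ∫ x : ℝ, (((x : ℂ) - a) ^ (p + 1) * ((x : ℂ) - b) ^ (q + 1))⁻¹ =
      2 * Real.pi * I * (-1) ^ p * (p + q).choose p / (a - b) ^ (p + q + 1) := by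
  induction p generalizing q with
  | zero => simpa using integral_inv_sub_mul_sub_pow ha hb q
  | succ p ihp =>
    induction q with
    | zero => simpa using integral_inv_sub_pow_mul_sub ha hb (p + 1)
    | succ q ihq =>
      have hab := sub_ne_zero_of_im_pos_of_im_neg ha hb
      have hrec := sub_mul_integral_inv_sub_pow_mul_sub_pow ha.ne' hb.ne (p := p + 1) (q := q + 1)
        (by lia)
      have hpascal : (p + 1 + (q + 1)).choose (p + 1) =
          (p + (q + 1)).choose p + (p + 1 + q).choose (p + 1) := by
        rw [← Nat.add_assoc (p + 1) q 1, Nat.choose_succ_succ, Nat.add_right_comm p 1 q,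
          Nat.add_assoc p q 1]
      refine mul_left_cancel₀ hab ?_
      rw [hrec, ihq, ihp (q + 1), hpascal]
      push_cast
      field_simp
      ring

end HalfPlanes

lemma integral_inv_sub_I_pow_mul_add_I_pow (k : ℕ) :
    ∫ x : ℝ, (((x : ℂ) - I) ^ (k + 2) * ((x : ℂ) + I) ^ (k + 1))⁻¹ =
      2 * Real.pi * I * (2 * k + 1).choose (k + 1) / 4 ^ (k + 1) := by
  have h := integral_inv_sub_pow_mul_sub_pow (a := I) (b := -I) (by simp) (by simp) (k + 1) k
  have hdiff : (I - -I) ^ (k + 1 + k + 1) = (-1) ^ (k + 1) * 4 ^ (k + 1) := by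
    rw [show k + 1 + k + 1 = 2 * (k + 1) by ring, pow_mul, ← mul_pow]
    congr 1
    linear_combination 4 * I_sq
  simp only [sub_neg_eq_add] at h hdiff
  rw [h, hdiff, show k + 1 + k = 2 * k + 1 by ring, mul_right_comm _ ((-1 : ℂ) ^ (k + 1)),
    mul_comm ((-1 : ℂ) ^ (k + 1)), mul_div_mul_right _ _ (by simp)]

lemma integrable_inv_sub_I_pow_mul_add_I_pow (k : ℕ) :
    Integrable fun x : ℝ ↦ (((x : ℂ) - I) ^ (k + 2) * ((x : ℂ) + I) ^ (k + 1))⁻¹ := by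
  simpa only [sub_neg_eq_add] using integrable_inv_sub_pow_mul_sub_pow (a := I) (b := -I)
    (by simp) (by simp) (p := k + 2) (q := k + 1) (by lia)

lemma quadratic_div_sub_I_pow_mul_add_I_pow (α β : ℂ) (k : ℕ) (x : ℝ) :
    (α * (x : ℂ) ^ 2 + β) / (((x : ℂ) - I) ^ (k + 3) * ((x : ℂ) + I) ^ (k + 2)) =
      α * (((x : ℂ) - I) ^ (k + 2) * ((x : ℂ) + I) ^ (k + 1))⁻¹ +
        (β - α) * (((x : ℂ) - I) ^ (k + 3) * ((x : ℂ) + I) ^ (k + 2))⁻¹ := by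
  have hsub : (x : ℂ) - I ≠ 0 := ofReal_sub_ne_zero_s5 (by simp) x
  have hadd : (x : ℂ) + I ≠ 0 := by
    simpa only [sub_neg_eq_add] using ofReal_sub_ne_zero_s5 (a := -I) (by simp) x
  have hnum : α * (x : ℂ) ^ 2 + β = α * ((x - I) * (x + I)) + (β - α) := by
    linear_combination α * I_sq
  rw [hnum]
  field_simp
  ring

theorem stmt5_general (m : ℕ) (hm : 1 ≤ m) (α β : ℂ) :
    ∫ x : ℝ, (α * (x : ℂ) ^ 2 + β) / (((x : ℂ) - I) ^ (m + 2) * ((x : ℂ) + I) ^ (m + 1)) =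
      2 * (Real.pi : ℂ) * I * (4 : ℂ) ^ (-((m : ℤ) + 1)) *
        (-α * (((2 * m + 1).choose (m + 1) : ℂ) - 4 * ((2 * m).choose m : ℂ) +
              4 * ((2 * m - 1).choose (m - 1) : ℂ)) +
          β * ((2 * m + 1).choose (m + 1) : ℂ)) := by
  obtain ⟨k, rfl⟩ := Nat.exists_eq_add_of_le' hm
  have hpascal : ((2 * (k + 1)).choose (k + 1) : ℂ) =
      (2 * (k + 1) - 1).choose (k + 1 - 1) + (2 * k + 1).choose (k + 1) := by
    exact_mod_cast Nat.choose_succ_succ (2 * k + 1) k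
  have hfour : (4 : ℂ) ^ (-(((k + 1 : ℕ) : ℤ) + 1)) = (4 ^ (k + 1 + 1))⁻¹ := by
    rw [zpow_neg]
    norm_cast
  simp_rw [quadratic_div_sub_I_pow_mul_add_I_pow]
  rw [integral_add ((integrable_inv_sub_I_pow_mul_add_I_pow k).const_mul α)
      ((integrable_inv_sub_I_pow_mul_add_I_pow (k + 1)).const_mul (β - α)),
    integral_const_mul, integral_const_mul, integral_inv_sub_I_pow_mul_add_I_pow,
    integral_inv_sub_I_pow_mul_add_I_pow, hpascal, hfour]
  field_simp
  ring

theorem stmt5 (m : ℕ) (hm : 1 ≤ m) :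
    ∫ x : ℝ, ((4 * (m : ℂ) - 2) * (x : ℂ) ^ 2 - 2) /
        (((x : ℂ) - I) ^ (m + 2) * ((x : ℂ) + I) ^ (m + 1)) =
      2 * (Real.pi : ℂ) * I * (4 : ℂ) ^ (-((m : ℤ) + 1)) *
        (-(4 * (m : ℂ) - 2) *
            (((2 * m + 1).choose (m + 1) : ℂ) - 4 * ((2 * m).choose m : ℂ) +
              4 * ((2 * m - 1).choose (m - 1) : ℂ)) -
          2 * ((2 * m + 1).choose (m + 1) : ℂ)) := by
  simpa only [neg_mul, ← sub_eq_add_neg] using stmt5_general m hm (4 * m - 2) (-2)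
end

section
/- Let m be a natural number with m ≥ 1. Then ∫_ℝ x/((x−i)^{m+2}·(x+i)^m) dx = (2πi/(m+1)!) · g^{(m+1)}(i), where g : ℂ → ℂ is g(z) = z/(z+i)^m. -/
open MeasureTheory Complex

/-!
For `m ≥ 1` the function `g z = z / (z + i) ^ m` is holomorphic and bounded on the closed upper
half-plane, so the claim is Cauchy's formula for the `(m + 1)`-st derivative with the real line in
place of a circle. Cauchy's theorem on large rectangles shows that `∫ f = 0` along the line, as a
limit over symmetric intervals, as soon as `z f(z) → 0` at infinity. For a simple pole at `w`,
subtract from `f` the multiple of `1 / (z - conj w)` with the same value at `w`; the correction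
contributes a multiple of the Poisson kernel `1 / |x - w| ^ 2`, of integral `π / |Im w|`. Higher
poles reduce to simple ones by replacing `f` with its difference quotient at `w`, since
`1 / (x - w) ^ (n + 2)` has a primitive vanishing at infinity.
-/

section CauchyUpperHalfPlane

open Set Filter Bornology
open scoped Topology Real ComplexConjugate

section LineIntegrals

variable {w : ℂ}

lemma ofReal_sub_ne_zero_s7 (hw : w.im ≠ 0) (x : ℝ) : (x : ℂ) - w ≠ 0 := by
  intro h
  apply hw
  simpa using congrArg im h

lemma continuous_inv_ofReal_sub_pow (hw : w.im ≠ 0) (n : ℕ) :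
    Continuous fun x : ℝ ↦ (((x : ℂ) - w) ^ n)⁻¹ :=
  Continuous.inv₀ (by fun_prop) fun x ↦ pow_ne_zero n (ofReal_sub_ne_zero_s7 hw x)

lemma inv_norm_ofReal_sub_sq (hw : w.im ≠ 0) (x : ℝ) :
    (‖(x : ℂ) - w‖ ^ 2)⁻¹ = (w.im ^ 2)⁻¹ * (1 + ((x - w.re) / w.im) ^ 2)⁻¹ := by
  rw [← mul_inv, ← normSq_eq_norm_sq, normSq_apply]
  simp only [sub_re, sub_im, ofReal_re, ofReal_im]
  field_simp
  ring

lemma integrable_inv_norm_ofReal_sub_sq (hw : w.im ≠ 0) :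
    Integrable fun x : ℝ ↦ (‖(x : ℂ) - w‖ ^ 2)⁻¹ := by
  simp only [inv_norm_ofReal_sub_sq hw]
  exact ((integrable_inv_one_add_sq.comp_div hw).comp_sub_right w.re).const_mul _

lemma integral_inv_norm_ofReal_sub_sq (hw : w.im ≠ 0) :
    ∫ x : ℝ, (‖(x : ℂ) - w‖ ^ 2)⁻¹ = π / |w.im| := by
  have : |w.im| ≠ 0 := abs_ne_zero.2 hw
  simp only [inv_norm_ofReal_sub_sq hw, integral_const_mul]
  rw [integral_sub_right_eq_self (fun x ↦ (1 + (x / w.im) ^ 2)⁻¹),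
    Measure.integral_comp_div (fun x ↦ (1 + x ^ 2)⁻¹), integral_univ_inv_one_add_sq, smul_eq_mul,
    ← sq_abs w.im]
  field_simp

lemma inv_sub_mul_inv_sub_conj (w : ℂ) (x : ℝ) :
    ((x : ℂ) - w)⁻¹ * ((x : ℂ) - conj w)⁻¹ = ((‖(x : ℂ) - w‖ ^ 2)⁻¹ : ℝ) := by
  rw [← mul_inv, ← conj_ofReal x, ← map_sub, conj_ofReal, mul_conj, normSq_eq_norm_sq, ofReal_inv]

lemma tendsto_inv_sub_cobounded (w : ℂ) : Tendsto (fun z ↦ (z - w)⁻¹) (cobounded ℂ) (𝓝 0) :=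
  tendsto_inv₀_cobounded.comp (tendsto_sub_const_cobounded w)

lemma tendsto_inv_sub_pow_cobounded (w : ℂ) {n : ℕ} (hn : n ≠ 0) :
    Tendsto (fun z ↦ ((z - w) ^ n)⁻¹) (cobounded ℂ) (𝓝 0) := by
  simpa [hn] using (tendsto_inv_sub_cobounded w).pow n

lemma tendsto_mul_inv_sub_cobounded (w : ℂ) :
    Tendsto (fun z ↦ z * (z - w)⁻¹) (cobounded ℂ) (𝓝 1) := by
  have h := ((tendsto_inv_sub_cobounded w).const_mul w).const_add 1
  rw [mul_zero, add_zero] at h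
  refine h.congr' ?_
  filter_upwards [eventually_ne_cobounded w] with z hz
  have : z - w ≠ 0 := sub_ne_zero.2 hz
  field_simp
  ring

lemma hasDerivAt_inv_sub_pow {z : ℂ} (hz : z - w ≠ 0) (n : ℕ) :
    HasDerivAt (fun z ↦ ((z - w) ^ n)⁻¹) (-n * ((z - w) ^ (n + 1))⁻¹) z := by
  have h := (((hasDerivAt_id z).sub_const w).fun_pow n).fun_inv (pow_ne_zero n hz)
  refine h.congr_deriv ?_
  rcases n with _ | n
  · simp
  · simp only [id, Nat.add_sub_cancel]
    field_simp
    ring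

lemma tendsto_intervalIntegral_inv_sub_pow (hw : w.im ≠ 0) (n : ℕ) :
    Tendsto (fun R : ℝ ↦ ∫ x in -R..R, (((x : ℂ) - w) ^ (n + 2))⁻¹) atTop (𝓝 0) := by
  set F : ℂ → ℂ := fun z ↦ -((n : ℂ) + 1)⁻¹ * ((z - w) ^ (n + 1))⁻¹
  have hF (x : ℝ) : HasDerivAt (fun x : ℝ ↦ F x) (((x : ℂ) - w) ^ (n + 2))⁻¹ x := by
    have hn : (n : ℂ) + 1 ≠ 0 := Nat.cast_add_one_ne_zero n
    refine ((hasDerivAt_inv_sub_pow (ofReal_sub_ne_zero_s7 hw x) (n + 1)).comp_ofReal.const_mul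
      (-((n : ℂ) + 1)⁻¹)).congr_deriv ?_
    push_cast
    field_simp
  have hFTC (R : ℝ) : ∫ x in -R..R, (((x : ℂ) - w) ^ (n + 2))⁻¹ = F R - F ↑(-R) :=
    intervalIntegral.integral_eq_sub_of_hasDerivAt (fun x _ ↦ hF x)
      ((continuous_inv_ofReal_sub_pow hw _).intervalIntegrable _ _)
  have hlim : Tendsto F (cobounded ℂ) (𝓝 0) := by
    simpa only [mul_zero] using (tendsto_inv_sub_pow_cobounded w n.succ_ne_zero).const_mul _
  simp only [hFTC]
  have hright : Tendsto (fun R : ℝ ↦ F R) atTop (𝓝 0) :=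
    hlim.comp (RCLike.tendsto_ofReal_atTop_cobounded ℂ)
  have hleft : Tendsto (fun R : ℝ ↦ F R) atBot (𝓝 0) :=
    hlim.comp (RCLike.tendsto_ofReal_atBot_cobounded ℂ)
  simpa only [sub_zero, Function.comp_def] using hright.sub (hleft.comp tendsto_neg_atTop_atBot)

lemma integrable_inv_sub_pow (hw : w.im ≠ 0) (n : ℕ) :
    Integrable fun x : ℝ ↦ (((x : ℂ) - w) ^ (n + 2))⁻¹ := by
  refine ((integrable_inv_norm_ofReal_sub_sq hw).const_mul (|w.im| ^ n)⁻¹).mono'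
    (by fun_prop) (ae_of_all _ fun x ↦ ?_)
  have him : |w.im| ≤ ‖(x : ℂ) - w‖ := by simpa using abs_im_le_norm (x - w)
  rw [norm_inv, norm_pow, pow_add, mul_inv]
  gcongr

end LineIntegrals

section DifferenceQuotient

lemma iteratedDeriv_succ_eq_smul_iteratedDeriv_dslope {𝕜 E : Type*} [NontriviallyNormedField 𝕜]
    [NormedAddCommGroup E] [NormedSpace 𝕜 E] [CompleteSpace E] {f : 𝕜 → E} {a : 𝕜}
    (hf : AnalyticAt 𝕜 f a) (n : ℕ) :
    iteratedDeriv (n + 1) f a = (n + 1) • iteratedDeriv n (dslope f a) a := by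
  have hcoeff {g : 𝕜 → E} {q : FormalMultilinearSeries 𝕜 𝕜 E} (hq : HasFPowerSeriesAt g q a)
      (k : ℕ) : iteratedDeriv k g a = k.factorial • q.coeff k := by
    obtain ⟨r, hr⟩ := hq
    simpa [iteratedDeriv_eq_iteratedFDeriv] using (hr.factorial_smul 1 k).symm
  obtain ⟨p, hp⟩ := hf
  rw [hcoeff hp, hcoeff hp.has_fpower_series_dslope_fslope, p.coeff_fslope, smul_smul,
    Nat.factorial_succ]

variable {E : Type*} [NormedAddCommGroup E] [NormedSpace ℂ E] [CompleteSpace E]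

lemma diffContOnCl_dslope {f : ℂ → E} {s : Set ℂ} {a : ℂ} (hf : DiffContOnCl ℂ f s)
    (hs : s ∈ 𝓝 a) : DiffContOnCl ℂ (dslope f a) s :=
  ⟨(differentiableOn_dslope hs).2 hf.differentiableOn,
    (continuousOn_dslope (mem_of_superset hs subset_closure)).2
      ⟨hf.continuousOn, hf.differentiableAt' hs⟩⟩

end DifferenceQuotient

variable {E : Type*} [NormedAddCommGroup E] [NormedSpace ℂ E] {f : ℂ → E} {w : ℂ}

lemma setOf_im_pos_mem_nhds (hw : 0 < w.im) : {z : ℂ | 0 < z.im} ∈ 𝓝 w :=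
  (isOpen_im_gt 0).mem_nhds hw

lemma continuous_comp_ofReal_of_diffContOnCl (hf : DiffContOnCl ℂ f {z | 0 < z.im}) :
    Continuous fun x : ℝ ↦ f x :=
  hf.continuousOn.comp_continuous continuous_ofReal fun x ↦ by
    simp [closure_setOfPred_lt_im]

lemma intervalIntegral_eq_rect_sides_of_diffContOnCl (hf : DiffContOnCl ℂ f {z | 0 < z.im}) {R : ℝ}
    (hR : 0 ≤ R) :
    ∫ x in -R..R, f x = (∫ x in -R..R, f (x + R * I)) -
      (I • ∫ y in 0..R, f (R + y * I)) + I • ∫ y in 0..R, f (↑(-R) + y * I) := by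
  have hrect := integral_boundary_rect_eq_zero_of_continuousOn_of_differentiableOn f (-R)
    (R + R * I) (hf.continuousOn.mono fun z hz ↦ ?_) (hf.differentiableOn.mono fun z hz ↦ ?_)
  · have hsides : (∫ x in -R..R, f x) - (∫ x in -R..R, f (x + R * I)) +
        (I • ∫ y in 0..R, f (R + y * I)) - (I • ∫ y in 0..R, f (↑(-R) + y * I)) = 0 := by
      simpa using hrect
    rwa [sub_eq_zero, ← eq_sub_iff_add_eq, sub_eq_iff_eq_add', add_sub_assoc', add_sub_right_comm]
      at hsides
  · rw [closure_setOfPred_lt_im]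
    have him : z.im ∈ Icc 0 R := by simpa [hR] using hz.2
    exact him.1
  · have him : z.im ∈ Ioo 0 R := by simpa [hR] using hz.2
    exact him.1

lemma norm_intervalIntegral_le_of_diffContOnCl (hf : DiffContOnCl ℂ f {z | 0 < z.im}) {R M : ℝ}
    (hR : 0 ≤ R) (hM : ∀ z : ℂ, 0 ≤ z.im → R ≤ ‖z‖ → ‖f z‖ ≤ M) :
    ‖∫ x in -R..R, f x‖ ≤ 4 * R * M := by
  have htop : ‖∫ x in -R..R, f (x + R * I)‖ ≤ M * |R - -R| := by
    refine intervalIntegral.norm_integral_le_of_norm_le_const fun x _ ↦ hM _ (by simpa) ?_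
    simpa [abs_of_nonneg hR] using abs_im_le_norm (x + R * I)
  have hside {c : ℝ} (hc : |c| = R) : ‖I • ∫ y in 0..R, f (c + y * I)‖ ≤ M * |R - 0| := by
    rw [norm_smul, norm_I, one_mul]
    refine intervalIntegral.norm_integral_le_of_norm_le_const fun y hy ↦ hM _ ?_ ?_
    · rw [uIoc_of_le hR] at hy
      simpa using hy.1.le
    · simpa [hc] using abs_re_le_norm (c + y * I)
  have hright := hside (abs_of_nonneg hR)
  have hleft := hside ((abs_neg R).trans (abs_of_nonneg hR))
  rw [sub_neg_eq_add, abs_of_nonneg (add_nonneg hR hR)] at htop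
  rw [sub_zero, abs_of_nonneg hR] at hright hleft
  rw [intervalIntegral_eq_rect_sides_of_diffContOnCl hf hR]
  linarith [norm_add_le_of_le (norm_sub_le_of_le htop hright) hleft]

lemma tendsto_intervalIntegral_zero_of_tendsto_smul (hf : DiffContOnCl ℂ f {z | 0 < z.im})
    (hlim : Tendsto (fun z ↦ z • f z) (cobounded ℂ ⊓ 𝓟 {z | 0 ≤ z.im}) (𝓝 0)) :
    Tendsto (fun R : ℝ ↦ ∫ x in -R..R, f x) atTop (𝓝 0) := by
  refine NormedAddGroup.tendsto_nhds_zero.2 fun ε hε ↦ ?_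
  obtain ⟨R₀, -, hR₀⟩ := hasBasis_cobounded_norm.eventually_iff.1 <| eventually_inf_principal.1 <|
    NormedAddGroup.tendsto_nhds_zero.1 hlim (ε / 8) (by positivity)
  filter_upwards [eventually_ge_atTop R₀, eventually_gt_atTop 0] with R hRR₀ hR
  have hbound (z : ℂ) (hz : 0 ≤ z.im) (hRz : R ≤ ‖z‖) : ‖f z‖ ≤ ε / 8 / R := by
    rw [le_div_iff₀' hR]
    calc R * ‖f z‖ ≤ ‖z‖ * ‖f z‖ := by gcongr
      _ = ‖z • f z‖ := (norm_smul z (f z)).symm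
      _ ≤ ε / 8 := (hR₀ (hRR₀.trans hRz) hz).le
  calc ‖∫ x in -R..R, f x‖ ≤ 4 * R * (ε / 8 / R) :=
        norm_intervalIntegral_le_of_diffContOnCl hf hR.le hbound
    _ = ε / 2 := by field_simp; norm_num
    _ < ε := half_lt_self hε

lemma inv_sub_pow_succ_smul_eq_add_dslope (f : ℂ → E) {z : ℂ} (hz : z - w ≠ 0) (n : ℕ) :
    ((z - w) ^ (n + 1))⁻¹ • f z =
      ((z - w) ^ n)⁻¹ • dslope f w z + ((z - w) ^ (n + 1))⁻¹ • f w := by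
  rw [← sub_eq_iff_eq_add, ← smul_sub, ← sub_smul_dslope f w z, smul_smul, pow_succ, mul_inv,
    inv_mul_cancel_right₀ hz]

lemma tendsto_inv_sub_pow_smul_dslope {l : Filter ℂ} (hl : l ≤ cobounded ℂ) {n : ℕ}
    (hlim : Tendsto (fun z ↦ ((z - w) ^ (n + 1))⁻¹ • f z) l (𝓝 0)) :
    Tendsto (fun z ↦ ((z - w) ^ n)⁻¹ • dslope f w z) l (𝓝 0) := by
  have h := hlim.sub
    (((tendsto_inv_sub_pow_cobounded w n.succ_ne_zero).mono_left hl).smul_const (f w))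
  rw [zero_smul, sub_zero] at h
  refine h.congr' ?_
  filter_upwards [hl (eventually_ne_cobounded w)] with z hz
  rw [inv_sub_pow_succ_smul_eq_add_dslope f (sub_ne_zero.2 hz), add_sub_cancel_right]

variable [CompleteSpace E]

lemma tendsto_intervalIntegral_inv_sub_smul_of_eq_zero (hf : DiffContOnCl ℂ f {z | 0 < z.im})
    (hw : 0 < w.im) (hfw : f w = 0) (hlim : Tendsto f (cobounded ℂ ⊓ 𝓟 {z | 0 ≤ z.im}) (𝓝 0)) :
    Tendsto (fun R : ℝ ↦ ∫ x in -R..R, ((x : ℂ) - w)⁻¹ • f x) atTop (𝓝 0) := by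
  have hslope {z : ℂ} (hz : z ≠ w) : dslope f w z = (z - w)⁻¹ • f z := by
    rw [dslope_of_ne f hz, slope_def_module, hfw, sub_zero]
  have hdecay : Tendsto (fun z ↦ z • dslope f w z) (cobounded ℂ ⊓ 𝓟 {z | 0 ≤ z.im}) (𝓝 0) := by
    have h := ((tendsto_mul_inv_sub_cobounded w).mono_left inf_le_left).smul hlim
    rw [smul_zero] at h
    refine h.congr' (eventually_inf_principal.2 ?_)
    filter_upwards [eventually_ne_cobounded w] with z hz _
    rw [hslope hz, smul_smul]
  have hreal (x : ℝ) : dslope f w x = ((x : ℂ) - w)⁻¹ • f x :=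
    hslope (sub_ne_zero.1 (ofReal_sub_ne_zero_s7 hw.ne' x))
  simpa only [hreal] using tendsto_intervalIntegral_zero_of_tendsto_smul
    (diffContOnCl_dslope hf (setOf_im_pos_mem_nhds hw)) hdecay

lemma diffContOnCl_inv_sub_conj (hw : 0 < w.im) :
    DiffContOnCl ℂ (fun z ↦ (z - conj w)⁻¹) {z | 0 < z.im} := by
  refine DiffContOnCl.inv (by fun_prop : Differentiable ℂ fun z ↦ z - conj w).diffContOnCl
    fun z hz h ↦ ?_
  rw [closure_setOfPred_lt_im] at hz
  have him : z.im + w.im = 0 := by simpa using congrArg im h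
  exact (add_pos_of_nonneg_of_pos hz hw).ne' him

theorem tendsto_intervalIntegral_inv_sub_smul (hf : DiffContOnCl ℂ f {z | 0 < z.im})
    (hw : 0 < w.im) (hlim : Tendsto f (cobounded ℂ ⊓ 𝓟 {z | 0 ≤ z.im}) (𝓝 0)) :
    Tendsto (fun R : ℝ ↦ ∫ x in -R..R, ((x : ℂ) - w)⁻¹ • f x) atTop (𝓝 ((2 * π * I) • f w)) := by
  set v : E := (w - conj w) • f w with hv
  set g : ℂ → E := fun z ↦ f z - (z - conj w)⁻¹ • v with hg
  have hww : w - conj w = (2 * w.im : ℝ) * I := sub_conj w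
  have hgw : g w = 0 := by
    have : w - conj w ≠ 0 := by simp [hww, hw.ne']
    simp only [hg, hv, inv_smul_smul₀ this, sub_self]
  have hgdiff : DiffContOnCl ℂ g {z | 0 < z.im} :=
    hf.sub ((diffContOnCl_inv_sub_conj hw).smul_const v)
  have hglim : Tendsto g (cobounded ℂ ⊓ 𝓟 {z | 0 ≤ z.im}) (𝓝 0) := by
    simpa only [zero_smul, sub_zero] using hlim.sub
      (((tendsto_inv_sub_cobounded (conj w)).mono_left inf_le_left).smul_const v)
  have hsplit (x : ℝ) :
      ((x : ℂ) - w)⁻¹ • f x = ((x : ℂ) - w)⁻¹ • g x + (‖(x : ℂ) - w‖ ^ 2)⁻¹ • v := by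
    simp only [hg, smul_sub, smul_smul, inv_sub_mul_inv_sub_conj, coe_smul, sub_add_cancel]
  have hgcont : Continuous fun x : ℝ ↦ ((x : ℂ) - w)⁻¹ • g x := by
    simpa only [pow_one] using (continuous_inv_ofReal_sub_pow hw.ne' 1).fun_smul
      (continuous_comp_ofReal_of_diffContOnCl hgdiff)
  have hpoisson := (integrable_inv_norm_ofReal_sub_sq hw.ne').smul_const v
  have hvalue : ∫ x : ℝ, (‖(x : ℂ) - w‖ ^ 2)⁻¹ • v = (2 * π * I) • f w := by
    have : (w.im : ℂ) ≠ 0 := ofReal_ne_zero.2 hw.ne'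
    rw [integral_smul_const, integral_inv_norm_ofReal_sub_sq hw.ne', abs_of_pos hw, hv, hww,
      ← coe_smul, smul_smul]
    congr 1
    push_cast
    field_simp
  have hlimit := (tendsto_intervalIntegral_inv_sub_smul_of_eq_zero hgdiff hw hgw hglim).add
    (intervalIntegral_tendsto_integral hpoisson tendsto_neg_atTop_atBot tendsto_id)
  rw [zero_add, hvalue] at hlimit
  refine hlimit.congr fun R ↦ ?_
  simp only [hsplit]
  exact (intervalIntegral.integral_add (hgcont.intervalIntegrable _ _)
    hpoisson.intervalIntegrable).symm

theorem tendsto_intervalIntegral_inv_sub_pow_smul (hw : 0 < w.im) (n : ℕ)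
    (hf : DiffContOnCl ℂ f {z | 0 < z.im})
    (hlim : Tendsto (fun z ↦ ((z - w) ^ n)⁻¹ • f z) (cobounded ℂ ⊓ 𝓟 {z | 0 ≤ z.im}) (𝓝 0)) :
    Tendsto (fun R : ℝ ↦ ∫ x in -R..R, (((x : ℂ) - w) ^ (n + 1))⁻¹ • f x) atTop
      (𝓝 ((2 * π * I / n.factorial) • iteratedDeriv n f w)) := by
  induction n generalizing f with
  | zero =>
    simpa using tendsto_intervalIntegral_inv_sub_smul hf hw (by simpa using hlim)
  | succ n ih =>
    have hnhds := setOf_im_pos_mem_nhds hw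
    have hslope := diffContOnCl_dslope hf hnhds
    have hvalue : (2 * π * I / n.factorial) • iteratedDeriv n (dslope f w) w =
        (2 * π * I / (n + 1).factorial) • iteratedDeriv (n + 1) f w := by
      rw [iteratedDeriv_succ_eq_smul_iteratedDeriv_dslope (hf.differentiableOn.analyticAt hnhds),
        ← Nat.cast_smul_eq_nsmul ℂ, smul_smul, Nat.factorial_succ]
      congr 1
      push_cast
      field_simp
    have hlimit := (ih hslope (tendsto_inv_sub_pow_smul_dslope inf_le_left hlim)).add
      ((tendsto_intervalIntegral_inv_sub_pow hw.ne' n).smul_const (f w))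
    rw [zero_smul, add_zero, hvalue] at hlimit
    refine hlimit.congr fun R ↦ ?_
    have hcont := continuous_inv_ofReal_sub_pow hw.ne'
    simp only [inv_sub_pow_succ_smul_eq_add_dslope f (ofReal_sub_ne_zero_s7 hw.ne' _) (n + 1)]
    rw [← intervalIntegral.integral_smul_const]
    exact (intervalIntegral.integral_add
      (((hcont _).smul (continuous_comp_ofReal_of_diffContOnCl hslope)).intervalIntegrable _ _)
      (((hcont _).smul continuous_const).intervalIntegrable _ _)).symm

theorem integral_inv_sub_pow_smul_of_norm_le (hf : DiffContOnCl ℂ f {z | 0 < z.im}) {C : ℝ}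
    (hC : ∀ z : ℂ, 0 ≤ z.im → ‖f z‖ ≤ C) (hw : 0 < w.im) (n : ℕ) :
    ∫ x : ℝ, (((x : ℂ) - w) ^ (n + 2))⁻¹ • f x =
      (2 * π * I / (n + 1).factorial) • iteratedDeriv (n + 1) f w := by
  have hint : Integrable fun x : ℝ ↦ (((x : ℂ) - w) ^ (n + 2))⁻¹ • f x :=
    (integrable_inv_sub_pow hw.ne' n).smul_bdd C
      (continuous_comp_ofReal_of_diffContOnCl hf).aestronglyMeasurable
      (ae_of_all _ fun x ↦ hC x (by simp))
  have hlim : Tendsto (fun z ↦ ((z - w) ^ (n + 1))⁻¹ • f z)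
      (cobounded ℂ ⊓ 𝓟 {z | 0 ≤ z.im}) (𝓝 0) :=
    ((tendsto_inv_sub_pow_cobounded w n.succ_ne_zero).mono_left
      inf_le_left).zero_smul_isBoundedUnder_le
      (isBoundedUnder_of_eventually_le (eventually_inf_principal.2 (.of_forall hC)))
  exact tendsto_nhds_unique
    (intervalIntegral_tendsto_integral hint tendsto_neg_atTop_atBot tendsto_id)
    (tendsto_intervalIntegral_inv_sub_pow_smul hw (n + 1) hf hlim)

lemma one_le_norm_add_I {z : ℂ} (hz : 0 ≤ z.im) : 1 ≤ ‖z + I‖ := by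
  have h := (le_abs_self _).trans (abs_im_le_norm (z + I))
  rw [add_im, I_im] at h
  linarith

lemma norm_le_norm_add_I {z : ℂ} (hz : 0 ≤ z.im) : ‖z‖ ≤ ‖z + I‖ := by
  rw [norm_def, norm_def, normSq_apply, normSq_apply]
  apply Real.sqrt_le_sqrt
  simp only [add_re, add_im, I_re, I_im]
  nlinarith

lemma diffContOnCl_div_add_I_pow (m : ℕ) :
    DiffContOnCl ℂ (fun z ↦ z / (z + I) ^ m) {z | 0 < z.im} := by
  refine DifferentiableOn.diffContOnCl fun z hz ↦ ?_
  rw [closure_setOfPred_lt_im] at hz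
  have hzI : z + I ≠ 0 := norm_pos_iff.1 (zero_lt_one.trans_le (one_le_norm_add_I hz))
  have hpow : (z + I) ^ m ≠ 0 := pow_ne_zero m hzI
  fun_prop (disch := assumption)

lemma norm_div_add_I_pow_le_one {m : ℕ} (hm : m ≠ 0) {z : ℂ} (hz : 0 ≤ z.im) :
    ‖z / (z + I) ^ m‖ ≤ 1 := by
  rw [norm_div, norm_pow]
  exact div_le_one_of_le₀ ((norm_le_norm_add_I hz).trans
    (le_self_pow₀ (one_le_norm_add_I hz) hm)) (by positivity)

end CauchyUpperHalfPlane

theorem stmt7 (m : ℕ) (hm : 1 ≤ m) :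
    ∫ x : ℝ, (x : ℂ) / (((x : ℂ) - I) ^ (m + 2) * ((x : ℂ) + I) ^ m) =
      (2 * (Real.pi : ℂ) * I / (Nat.factorial (m + 1) : ℂ)) *
        iteratedDeriv (m + 1) (fun z : ℂ => z / (z + I) ^ m) I := by
  have hcauchy := integral_inv_sub_pow_smul_of_norm_le (w := I) (diffContOnCl_div_add_I_pow m)
    (fun _ ↦ norm_div_add_I_pow_le_one (Nat.one_le_iff_ne_zero.1 hm)) (by simp) m
  rw [← smul_eq_mul, ← hcauchy]
  congr 1 with x
  rw [smul_eq_mul, div_mul_eq_div_div_swap, inv_mul_eq_div]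
end

section
/- Let ξ₀ be a real number, let r be a real number with 0 < r < 1, and let a, b be complex numbers. Then (1/(2πi)) · ∮_{z ∈ C(i,r)} ( (a + z·b)/(1 + z²)² ) / (ξ₀ − z) dz = −((i·ξ₀ + 2)·a + i·b)/(4·(ξ₀ − i)²). -/
open Complex

/-!
Since `1 + z² = (z - i)(z + i)`, the function `h(z) = (a + z b) / (1 + z²)²` equals
`f(z) / (z - i)²` with `f(z) = (a + z b) / (z + i)²` holomorphic near the disc. Cauchy's formula
for the derivative of `z ↦ f(z) / (ξ - z)` at `i` gives
`π⁺h(ξ) = f'(i) / (ξ - i) + f(i) / (ξ - i)²`. Here `f(i) = -(a + i b) / 4`, and the two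
contributions of `b` to `f'(i)` cancel, leaving `f'(i) = -i a / 4`.
-/

section Derivatives

variable {𝕜 F : Type*} [NontriviallyNormedField 𝕜] [NormedAddCommGroup F] [NormedSpace 𝕜 F]

theorem hasDerivAt_inv_sub_smul {f : 𝕜 → F} {f' : F} {ξ w : 𝕜} (hf : HasDerivAt f f' w)
    (hξ : ξ ≠ w) :
    HasDerivAt (fun z ↦ (ξ - z)⁻¹ • f z) ((ξ - w)⁻¹ • f' + ((ξ - w) ^ 2)⁻¹ • f w) w := by
  have hinv : HasDerivAt (fun z ↦ (ξ - z)⁻¹) ((ξ - w) ^ 2)⁻¹ w := by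
    simpa using ((hasDerivAt_id w).const_sub ξ).fun_inv (sub_ne_zero.mpr hξ)
  exact hinv.fun_smul hf

theorem hasDerivAt_add_sq_inv_smul (a b : F) {w z : 𝕜} (hz : z ≠ -w) :
    HasDerivAt (fun z ↦ ((z + w) ^ 2)⁻¹ • (a + z • b))
      (((z + w) ^ 3)⁻¹ • ((w - z) • b - (2 : 𝕜) • a)) z := by
  have hzw : z + w ≠ 0 := mt eq_neg_of_add_eq_zero_left hz
  have hinv : HasDerivAt (fun z ↦ ((z + w) ^ 2)⁻¹) (-(2 * (z + w)) / ((z + w) ^ 2) ^ 2) z := by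
    simpa using (((hasDerivAt_id z).add_const w).fun_pow 2).fun_inv (pow_ne_zero 2 hzw)
  have hnum : HasDerivAt (fun z ↦ a + z • b) b z := by
    simpa using ((hasDerivAt_id z).smul_const b).const_add a
  refine (hinv.fun_smul hnum).congr_deriv ?_
  match_scalars
  · field_simp
    ring
  · field_simp

end Derivatives

variable {E : Type*} [NormedAddCommGroup E] [NormedSpace ℂ E]

/-- The Hardy-space projection `π⁺h(ξ) = (1 / 2πi) ∮ h(z) / (ξ - z) dz` of Boutet de Monvel's
calculus, for a vector-valued `h`. The contour `Γ⁺` is taken to be the circle `C(c, r)`, so this is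
the projection only if the circle encloses the poles of `h` in the upper half-plane and no other
singularity of the integrand. -/
noncomputable def hardyProjection (c : ℂ) (r : ℝ) (h : ℂ → E) (ξ : ℂ) : E :=
  (2 * Real.pi * I : ℂ)⁻¹ • ∮ z in C(c, r), (ξ - z)⁻¹ • h z

theorem hardyProjection_eq_mul_circleIntegral_div (c : ℂ) (r : ℝ) (h : ℂ → ℂ) (ξ : ℂ) :
    hardyProjection c r h ξ = 1 / (2 * Real.pi * I) * ∮ z in C(c, r), h z / (ξ - z) := by
  simp only [hardyProjection, smul_eq_mul, div_eq_inv_mul, mul_one]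

theorem hardyProjection_sub_sq_inv_smul [CompleteSpace E] {U : Set ℂ} (hU : IsOpen U) {c : ℂ}
    {r : ℝ} (hcU : Metric.closedBall c r ⊆ U) {f : ℂ → E} (hf : DifferentiableOn ℂ f U) {w : ℂ}
    (hw : w ∈ Metric.ball c r) {ξ : ℂ} (hξ : ξ ∉ Metric.closedBall c r) :
    hardyProjection c r (fun z ↦ ((z - w) ^ 2)⁻¹ • f z) ξ =
      (ξ - w)⁻¹ • deriv f w + ((ξ - w) ^ 2)⁻¹ • f w := by
  have hderiv : ∀ z ∈ U \ {ξ}, HasDerivAt (fun z ↦ (ξ - z)⁻¹ • f z)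
      ((ξ - z)⁻¹ • deriv f z + ((ξ - z) ^ 2)⁻¹ • f z) z := fun z hz ↦
    hasDerivAt_inv_sub_smul (hf.differentiableAt (hU.mem_nhds hz.1)).hasDerivAt (Ne.symm hz.2)
  have hsub : Metric.closedBall c r ⊆ U \ {ξ} := Set.subset_sdiff_singleton hcU hξ
  have hcauchy := two_pi_I_inv_smul_circleIntegral_sub_sq_inv_smul_of_differentiable
    (hU.sdiff isClosed_singleton) hsub
    (fun z hz ↦ (hderiv z hz).differentiableAt.differentiableWithinAt) hw
  rw [(hderiv w (hsub (Metric.ball_subset_closedBall hw))).deriv] at hcauchy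
  simpa only [hardyProjection, smul_comm (ξ - _)⁻¹] using hcauchy

theorem deriv_add_I_sq_inv_smul_I (a b : E) :
    deriv (fun z ↦ ((z + I) ^ 2)⁻¹ • (a + z • b)) I = -(I / 4) • a := by
  have hcube : ((I + I) ^ 3)⁻¹ = I / 8 := by
    rw [← two_mul, mul_pow, I_pow_three, mul_inv, inv_neg, inv_I]
    ring
  rw [(hasDerivAt_add_sq_inv_smul a b (self_ne_neg.mpr I_ne_zero)).deriv, hcube]
  module

theorem one_add_sq_eq_sub_I_mul_add_I (z : ℂ) : 1 + z ^ 2 = (z - I) * (z + I) := by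
  linear_combination I_sq

theorem stmt13_general [CompleteSpace E] {c : ℂ} {r : ℝ} (hI : I ∈ Metric.ball c r)
    (hnegI : -I ∉ Metric.closedBall c r) {ξ : ℂ} (hξ : ξ ∉ Metric.closedBall c r) (a b : E) :
    hardyProjection c r (fun z ↦ ((1 + z ^ 2) ^ 2)⁻¹ • (a + z • b)) ξ =
      (4 * (ξ - I) ^ 2)⁻¹ • -((I * ξ + 2) • a + I • b) := by
  have hξI : ξ - I ≠ 0 :=
    sub_ne_zero.mpr fun h ↦ hξ (h ▸ Metric.ball_subset_closedBall hI)
  have hdiff : DifferentiableOn ℂ (fun z ↦ ((z + I) ^ 2)⁻¹ • (a + z • b)) {-I}ᶜ := fun z hz ↦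
    (hasDerivAt_add_sq_inv_smul a b hz).differentiableAt.differentiableWithinAt
  have hfactor : (fun z : ℂ ↦ ((1 + z ^ 2) ^ 2)⁻¹ • (a + z • b)) =
      fun z ↦ ((z - I) ^ 2)⁻¹ • ((z + I) ^ 2)⁻¹ • (a + z • b) := by
    simp only [one_add_sq_eq_sub_I_mul_add_I, mul_pow, mul_inv, mul_smul]
  have hsq : ((I + I) ^ 2)⁻¹ = -(1 / 4 : ℂ) := by
    rw [← two_mul, mul_pow, I_sq]
    norm_num
  rw [hfactor, hardyProjection_sub_sq_inv_smul isOpen_compl_singleton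
    (Set.subset_compl_singleton_iff.mpr hnegI) hdiff hI hξ, deriv_add_I_sq_inv_smul_I, hsq]
  match_scalars
  · field_simp
    linear_combination I_sq
  · field_simp

theorem notMem_closedBall_of_im_nonpos {c z : ℂ} {r : ℝ} (hr : r < c.im) (hz : z.im ≤ 0) :
    z ∉ Metric.closedBall c r := by
  intro hmem
  have him : |z.im - c.im| ≤ r := by
    simpa only [sub_im] using (abs_im_le_norm (z - c)).trans (mem_closedBall_iff_norm.mp hmem)
  linarith [neg_le_of_abs_le him]

theorem stmt13 (ξ₀ : ℝ) (r : ℝ) (hr0 : 0 < r) (hr1 : r < 1) (a b : ℂ) :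
    (1 / (2 * (Real.pi : ℂ) * I)) *
        (∮ z in C(I, r), ((a + z * b) / (1 + z ^ 2) ^ 2) / ((ξ₀ : ℂ) - z)) =
      -((I * (ξ₀ : ℂ) + 2) * a + I * b) / (4 * ((ξ₀ : ℂ) - I) ^ 2) := by
  simpa only [hardyProjection_eq_mul_circleIntegral_div, smul_eq_mul, ← div_eq_inv_mul] using
    stmt13_general (Metric.mem_ball_self hr0) (notMem_closedBall_of_im_nonpos hr1 (by simp))
      (notMem_closedBall_of_im_nonpos hr1 (ofReal_im ξ₀).le) a b
end
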